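/- arXiv:1512.01697 — 3 statements merged into one kernel-verified Lean document; each statement's English description precedes it below -/
import Mathlib

section
/- Let g be a finite-dimensional Lie algebra over ℂ with solvable radical r, and let α be a semisimple automorphism of g having exactly n distinct eigenvalues and whose fixed-point subalgebra has dimension m. Then the derived length of r is at most (m + 1)·2^(n-1) + m. -/
/-!
Write `K = 2 ^ (n - 1)`. The eigenspaces of `α` grade `g` by the multiplicative group of `ℂ`, and
there are two ingredients.

*Kreknin's theorem.* Suppose a Lie algebra graded by `ℂˣ` has at most `d` nonzero components, none
of degree one. Then its `2 ^ (d - 1)`-st derived algebra vanishes (`IsCyclicGraded.iterate_eq_bot`).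
The group `ℂˣ` carries a translation-invariant cyclic order; cutting it open at `1` orders the
degrees linearly so that a product of two degrees is either larger than both factors or smaller
than both (`exists_rank`). Number the degrees by their rank in this order. One shows that
`L^(f(k))` is contained in the subalgebra generated by the components of rank at least `k`
(`genFamily`). Kreknin's elimination of one further rank gives `f (k + 1) = 2 * f k + 1`
(`genFamily_double`), hence only the bound `2 ^ d - 1`. The missing factor is gained at the two
ends. First, `f 2 = 2` is possible rather than `3` (`genFamily_two`), which yields
`f (k + 2) = 3 * 2 ^ k - 1`. Second, when only the top rank `d - 1` is left, bracketing with a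
generator strictly lowers ranks, so the remaining subalgebra is nilpotent and its derived length is
at most `d - 1` for `d ≥ 3` (`iterate_top`). For `d ≥ 3` the total is at most
`(3 * 2 ^ (d - 3) - 1) + (d - 1) ≤ 2 ^ (d - 1)`; for `d = 1` and `d = 2` either refinement alone
suffices.

*Dimension drop.* Let `M` be a term of the derived series of the radical `r`, and `N ≤ M` an ideal
containing the fixed points of `α` in `M`. Kreknin's theorem in `g ⧸ N` gives `M^(K) ≤ N`. Taking
`N = M^(K + 1)`: if the dimension of the space of fixed points does not drop from `M` to
`M^(K + 1)`, then `M^(K) = M^(K + 1)`, which is zero by solvability. So the dimension drops at most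
`m` times, each time after `K + 1` derivations, and once there are no fixed points `K` more
derivations suffice: altogether `m * (K + 1) + K = (m + 1) * K + m`.
-/

namespace ShalevBound

/-! ### Kreknin's theorem for cyclically ordered gradings -/

section Kreknin

variable {R L G : Type*} [CommRing R] [LieRing L] [LieAlgebra R L] [CommSemigroup G]

/-- The homogeneous components of the derived algebra of the family `V`: the component of degree
`a` is spanned by the brackets of components whose degrees multiply to `a`. The sum of the `V a`
is not assumed to be direct, which is why degrees are tracked by the family. -/
def derivedFamily (V : G → Submodule R L) (a : G) : Submodule R L :=
  Submodule.span R {z | ∃ p q x y, p * q = a ∧ x ∈ V p ∧ y ∈ V q ∧ ⁅x, y⁆ = z}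

/-- A family of submodules multiplicatively graded by `G`, with a rank function on degrees such
that, whenever a bracket is nonzero, the rank of its degree does not lie weakly between the ranks
of the degrees of the two factors. In particular, if `G` has an identity, then the
component of degree one commutes with every component. -/
structure IsCyclicGraded (V : G → Submodule R L) (ρ : G → ℕ) : Prop where
  lie_mem : ∀ {a b x y}, x ∈ V a → y ∈ V b → ⁅x, y⁆ ∈ V (a * b)
  sep : ∀ {a b x y}, x ∈ V a → y ∈ V b → ⁅x, y⁆ ≠ 0 →
    (ρ (a * b) < ρ a ∧ ρ (a * b) < ρ b) ∨ (ρ a < ρ (a * b) ∧ ρ b < ρ (a * b))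

/-- `IsGen V ρ k a x` says that `x` is an element of degree `a` of the subalgebra generated by
the components of `V` whose degree has rank at least `k`. -/
inductive IsGen (V : G → Submodule R L) (ρ : G → ℕ) (k : ℕ) : G → L → Prop
  | of {a x} : k ≤ ρ a → x ∈ V a → IsGen V ρ k a x
  | zero {a} : IsGen V ρ k a 0
  | add {a x y} : IsGen V ρ k a x → IsGen V ρ k a y → IsGen V ρ k a (x + y)
  | smul {a x} (c : R) : IsGen V ρ k a x → IsGen V ρ k a (c • x)
  | lie {a b x y} : IsGen V ρ k a x → IsGen V ρ k b y → IsGen V ρ k (a * b) ⁅x, y⁆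

/-- The family of submodules attached to `IsGen`. -/
def genFamily (V : G → Submodule R L) (ρ : G → ℕ) (k : ℕ) (a : G) : Submodule R L where
  carrier := {x | IsGen V ρ k a x}
  add_mem' := IsGen.add
  zero_mem' := IsGen.zero
  smul_mem' c _ := IsGen.smul c

variable {V W : G → Submodule R L} {ρ : G → ℕ}

theorem derivedFamily_le_iff {a : G} {N : Submodule R L} :
    derivedFamily V a ≤ N ↔
      ∀ p q x y, p * q = a → x ∈ V p → y ∈ V q → ⁅x, y⁆ ∈ N := by
  rw [derivedFamily, Submodule.span_le]
  constructor
  · intro h p q x y hpq hx hy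
    exact h ⟨p, q, x, y, hpq, hx, hy, rfl⟩
  · rintro h _ ⟨p, q, x, y, hpq, hx, hy, rfl⟩
    exact h p q x y hpq hx hy

theorem lie_mem_derivedFamily {p q : G} {x y : L} (hx : x ∈ V p) (hy : y ∈ V q) :
    ⁅x, y⁆ ∈ derivedFamily V (p * q) :=
  derivedFamily_le_iff.1 le_rfl p q x y rfl hx hy

theorem derivedFamily_mono (h : V ≤ W) : derivedFamily V ≤ derivedFamily W := fun _ ↦
  derivedFamily_le_iff.2 fun p q _ _ hpq hx hy ↦
    hpq ▸ lie_mem_derivedFamily (h p hx) (h q hy)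

theorem iterate_mono (h : V ≤ W) (k : ℕ) : derivedFamily^[k] V ≤ derivedFamily^[k] W := by
  induction k with
  | zero => exact h
  | succ k ih =>
    rw [Function.iterate_succ_apply', Function.iterate_succ_apply']
    exact derivedFamily_mono ih

namespace IsCyclicGraded

theorem derivedFamily_le (hV : IsCyclicGraded V ρ) : derivedFamily V ≤ V := fun _ ↦
  derivedFamily_le_iff.2 fun _ _ _ _ hpq hx hy ↦ hpq ▸ hV.lie_mem hx hy

theorem derived (hV : IsCyclicGraded V ρ) : IsCyclicGraded (derivedFamily V) ρ where
  lie_mem hx hy := lie_mem_derivedFamily (hV.derivedFamily_le _ hx) (hV.derivedFamily_le _ hy)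
  sep hx hy := hV.sep (hV.derivedFamily_le _ hx) (hV.derivedFamily_le _ hy)

theorem iterate (hV : IsCyclicGraded V ρ) (k : ℕ) :
    IsCyclicGraded (derivedFamily^[k] V) ρ := by
  induction k with
  | zero => exact hV
  | succ k ih => rw [Function.iterate_succ_apply']; exact ih.derived

theorem iterate_le (hV : IsCyclicGraded V ρ) (k : ℕ) : derivedFamily^[k] V ≤ V := by
  induction k with
  | zero => exact le_rfl
  | succ k ih =>
    rw [Function.iterate_succ_apply']
    exact (hV.iterate k).derivedFamily_le.trans ih

theorem mem_of_isGen (hV : IsCyclicGraded V ρ) {k : ℕ} {a : G} {x : L}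
    (h : IsGen V ρ k a x) : x ∈ V a := by
  induction h with
  | of _ h => exact h
  | zero => exact zero_mem _
  | add _ _ h₁ h₂ => exact add_mem h₁ h₂
  | smul c _ h => exact Submodule.smul_mem _ c h
  | lie _ _ h₁ h₂ => exact hV.lie_mem h₁ h₂

/-- Bracketing with an element of the subalgebra generated by the components of rank at least `k`
amounts, by the Jacobi identity, to a final bracketing with elements of those components. -/
theorem lie_isGen_mem_span (hV : IsCyclicGraded V ρ) {k : ℕ} {b : G} {y : L}
    (hy : IsGen V ρ k b y) :
    ∀ {c : G} {x : L}, x ∈ V c → ⁅x, y⁆ ∈ Submodule.span R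
      {z | ∃ s j u w, s * j = c * b ∧ k ≤ ρ j ∧ u ∈ V s ∧ w ∈ V j ∧ ⁅u, w⁆ = z} := by
  induction hy with
  | of hk hy => exact fun hx ↦ Submodule.subset_span ⟨_, _, _, _, rfl, hk, hx, hy, rfl⟩
  | zero => intro c x _; rw [lie_zero]; exact zero_mem _
  | add _ _ h₁ h₂ => intro c x hx; rw [lie_add]; exact add_mem (h₁ hx) (h₂ hx)
  | smul r _ h => intro c x hx; rw [lie_smul]; exact Submodule.smul_mem _ r (h hx)
  | @lie a b y₁ y₂ g₁ g₂ h₁ h₂ =>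
    intro c x hx
    have e : ⁅x, ⁅y₁, y₂⁆⁆ = ⁅⁅x, y₁⁆, y₂⁆ - ⁅⁅x, y₂⁆, y₁⁆ := by
      rw [leibniz_lie x y₁ y₂, ← lie_skew y₁ ⁅x, y₂⁆, sub_eq_add_neg]
    rw [e]
    refine sub_mem ?_ ?_
    · have := h₂ (hV.lie_mem hx (hV.mem_of_isGen g₁))
      rwa [mul_assoc] at this
    · have := h₁ (hV.lie_mem hx (hV.mem_of_isGen g₂))
      rwa [mul_assoc, mul_comm b a] at this

/-- Eliminating a degree of rank `k` from the generators: the last factor cannot have rank `k`, so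
both factors have larger rank. -/
theorem lie_isGen_succ (hV : IsCyclicGraded V ρ) {k : ℕ} {c b : G} {x y : L} (hx : x ∈ V c)
    (hy : IsGen V ρ k b y) (hk : ρ (c * b) = k) : IsGen V ρ (k + 1) (c * b) ⁅x, y⁆ := by
  have h := hV.lie_isGen_mem_span hy hx
  change _ ∈ genFamily V ρ (k + 1) (c * b)
  refine Submodule.span_le.2 ?_ h
  rintro _ ⟨s, j, u, w, hsj, hj, hu, hw, rfl⟩
  by_cases h0 : ⁅u, w⁆ = 0
  · rw [h0]; exact zero_mem _
  have := hV.sep hu hw h0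
  rw [hsj, hk] at this
  rw [← hsj]
  exact IsGen.lie (.of (by omega) hu) (.of (by omega) hw)

/-- The inductive step of Kreknin's argument. -/
theorem genFamily_step {k f : ℕ}
    (H : ∀ V : G → Submodule R L, IsCyclicGraded V ρ → derivedFamily^[f] V ≤ genFamily V ρ k)
    (hV : IsCyclicGraded V ρ) {a : G} (ha : ρ a = k) :
    derivedFamily^[f + 1] V a ≤ genFamily V ρ (k + 1) a := by
  rw [Function.iterate_succ_apply']
  refine derivedFamily_le_iff.2 fun p q x y hpq hx hy ↦ ?_
  subst hpq
  exact hV.lie_isGen_succ (hV.iterate_le f p hx) (H V hV q hy) ha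

theorem genFamily_double {k f : ℕ}
    (H : ∀ V : G → Submodule R L, IsCyclicGraded V ρ → derivedFamily^[f] V ≤ genFamily V ρ k)
    (hV : IsCyclicGraded V ρ) :
    derivedFamily^[2 * f + 1] V ≤ genFamily V ρ (k + 1) := by
  intro a x hx
  have e : 2 * f + 1 = f + (f + 1) := by ring
  rw [e, Function.iterate_add_apply] at hx
  have hx' : IsGen _ ρ k a x := H _ (hV.iterate (f + 1)) a hx
  change IsGen V ρ (k + 1) a x
  clear hx
  induction hx' with
  | @of b x hk h =>
    rcases hk.eq_or_lt with hk | hk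
    · exact genFamily_step H hV hk.symm h
    · exact .of hk (hV.iterate_le _ _ h)
  | zero => exact .zero
  | add _ _ h₁ h₂ => exact .add h₁ h₂
  | smul c _ h => exact .smul c h
  | lie _ _ h₁ h₂ => exact .lie h₁ h₂

theorem genFamily_zero : V ≤ genFamily V ρ 0 := fun _ _ hx ↦ .of (Nat.zero_le _) hx

theorem genFamily_one (hV : IsCyclicGraded V ρ) : derivedFamily^[1] V ≤ genFamily V ρ 1 :=
  genFamily_double (k := 0) (f := 0) (fun _ _ ↦ genFamily_zero) hV

/-- In a bracket of degree of rank `0`, a factor lying in the derived algebra may be replaced by an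
element generated by the components of rank at least `2`: a factor `⁅u, v⁆` with `u`, `v` of rank
`0` contributes nothing, since bracketing `u` with anything never has degree of rank `0`. -/
theorem exists_isGen_two (hV : IsCyclicGraded V ρ) {p q : G} (hpq : ρ (p * q) = 0) {x : L}
    (hx : x ∈ derivedFamily V p) :
    ∃ x', IsGen V ρ 2 p x' ∧ ∀ y ∈ V q, ⁅x, y⁆ = ⁅x', y⁆ := by
  have kill : ∀ {r c : G} {u v : L}, u ∈ V r → v ∈ V c → ρ r = 0 → ρ (r * c) = 0 → ⁅u, v⁆ = 0 := by
    intro r c u v hu hv h₁ h₂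
    by_contra h0
    have := hV.sep hu hv h0
    omega
  rcases Nat.lt_or_ge (ρ p) 2 with hp | hp
  swap
  · exact ⟨x, .of hp (hV.derivedFamily_le _ hx), fun _ _ ↦ rfl⟩
  rcases Nat.lt_or_ge (ρ p) 1 with hp0 | hp1
  · exact ⟨0, .zero, fun y hy ↦ by
      rw [kill (hV.derivedFamily_le _ hx) hy (by omega) hpq, zero_lie]⟩
  unfold derivedFamily at hx
  induction hx using Submodule.span_induction with
  | zero => exact ⟨0, .zero, fun _ _ ↦ rfl⟩
  | add x y _ _ hx hy =>
    obtain ⟨x', hx', hx⟩ := hx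
    obtain ⟨y', hy', hy⟩ := hy
    exact ⟨x' + y', .add hx' hy', fun z hz ↦ by rw [add_lie, add_lie, hx z hz, hy z hz]⟩
  | smul c x _ hx =>
    obtain ⟨x', hx', hx⟩ := hx
    exact ⟨c • x', .smul c hx', fun z hz ↦ by rw [smul_lie, smul_lie, hx z hz]⟩
  | mem z hz =>
    obtain ⟨r, s, u, v, hrs, hu, hv, rfl⟩ := hz
    by_cases h0 : ⁅u, v⁆ = 0
    · exact ⟨0, .zero, fun y _ ↦ by rw [h0]⟩
    have hsep := hV.sep hu hv h0
    rw [hrs] at hsep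
    rcases hsep with hsep | hsep
    · exact ⟨⁅u, v⁆, hrs ▸ .lie (.of (by omega) hu) (.of (by omega) hv), fun _ _ ↦ rfl⟩
    · refine ⟨0, .zero, fun y hy ↦ ?_⟩
      have h₁ : ⁅u, ⁅v, y⁆⁆ = 0 :=
        kill hu (hV.lie_mem hv hy) (by omega) (by rw [← mul_assoc, hrs, hpq])
      have h₂ : ⁅v, ⁅u, y⁆⁆ = 0 :=
        kill hv (hV.lie_mem hu hy) (by omega)
          (by rw [← mul_assoc, mul_comm s r, hrs, hpq])
      rw [zero_lie, lie_lie, h₁, h₂, sub_zero]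

/-- Two derivations, rather than the three given by `genFamily_double`, suffice to eliminate the
two lowest ranks. -/
theorem genFamily_two (hV : IsCyclicGraded V ρ) : derivedFamily^[2] V ≤ genFamily V ρ 2 := by
  intro a
  rcases Nat.lt_trichotomy (ρ a) 1 with ha | ha | ha
  · rw [Function.iterate_succ_apply', Function.iterate_one]
    refine derivedFamily_le_iff.2 fun p q x y hpq hx hy ↦ ?_
    subst hpq
    obtain ⟨x', gx, hx'⟩ := hV.exists_isGen_two (q := q) (by omega) hx
    obtain ⟨y', gy, hy'⟩ := hV.exists_isGen_two (p := q) (q := p) (by rw [mul_comm]; omega) hy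
    rw [hx' y (hV.derivedFamily_le _ hy), ← lie_skew, hy' x' (hV.mem_of_isGen gx), lie_skew]
    exact .lie gx gy
  · exact genFamily_step (fun _ h ↦ h.genFamily_one) hV ha
  · exact fun x hx ↦ .of ha (hV.iterate_le _ _ hx)

/-- Starting from `genFamily_two`, each further rank costs a doubling of the exponent. -/
theorem genFamily_add_two (k : ℕ) : ∀ V : G → Submodule R L, IsCyclicGraded V ρ →
    derivedFamily^[3 * 2 ^ k - 1] V ≤ genFamily V ρ (k + 2) := by
  induction k with
  | zero => exact fun V hV ↦ hV.genFamily_two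
  | succ k ih =>
    intro V hV
    have h := genFamily_double ih hV
    have hpos : 0 < 2 ^ k := by positivity
    have e : 3 * 2 ^ (k + 1) - 1 = 2 * (3 * 2 ^ k - 1) + 1 := by rw [pow_succ]; omega
    rwa [e, show k + 1 + 2 = k + 2 + 1 by ring]

/-- Bracketing with the subalgebra generated by the components of top rank `d - 1` strictly lowers
the rank. -/
theorem lie_isGen_top (hV : IsCyclicGraded V ρ) {d : ℕ}
    (hd : ∀ a, ∀ x ∈ V a, x ≠ 0 → ρ a < d) {b : G} {y : L} (hy : IsGen V ρ (d - 1) b y) :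
    ∀ {c : G} {z : L}, z ∈ V c → ρ c ≤ ρ (c * b) → ⁅z, y⁆ = 0 := by
  induction hy with
  | @of b y hk hy =>
    intro c z hz h
    by_contra h0
    have h₁ := hV.sep hz hy h0
    have h₂ := hd _ _ (hV.lie_mem hz hy) h0
    omega
  | zero => intro c z _ _; exact lie_zero _
  | add _ _ h₁ h₂ => intro c z hz h; rw [lie_add, h₁ hz h, h₂ hz h, add_zero]
  | smul r _ h₁ => intro c z hz h; rw [lie_smul, h₁ hz h, smul_zero]
  | @lie a b y₁ y₂ g₁ g₂ h₁ h₂ =>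
    intro c z hz h
    have key : ∀ {a b : G} {y₁ y₂ : L}, IsGen V ρ (d - 1) a y₁ →
        (∀ {c : G} {z : L}, z ∈ V c → ρ c ≤ ρ (c * a) → ⁅z, y₁⁆ = 0) →
        (∀ {c : G} {z : L}, z ∈ V c → ρ c ≤ ρ (c * b) → ⁅z, y₂⁆ = 0) →
        ρ c ≤ ρ (c * (a * b)) → ⁅⁅z, y₁⁆, y₂⁆ = 0 := by
      intro a b y₁ y₂ g₁ h₁ h₂ h
      by_cases hc : ρ (c * a) ≤ ρ (c * a * b)
      · exact h₂ (hV.lie_mem hz (hV.mem_of_isGen g₁)) hc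
      · rw [mul_assoc] at hc
        rw [h₁ hz (by omega), zero_lie]
    rw [leibniz_lie z y₁ y₂, ← lie_skew y₁ ⁅z, y₂⁆, key g₁ h₁ h₂ h,
      key g₂ h₂ h₁ (by rwa [mul_comm b a]), neg_zero, add_zero]

/-- Bracketing with the derived algebra of that subalgebra lowers the rank by at least two. -/
theorem lie_derived_top (hV : IsCyclicGraded V ρ) {d : ℕ}
    (hd : ∀ a, ∀ x ∈ V a, x ≠ 0 → ρ a < d) {b c : G} {y z : L}
    (hy : y ∈ derivedFamily (genFamily V ρ (d - 1)) b) (hz : z ∈ V c)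
    (h : ρ c ≤ ρ (c * b) + 1) : ⁅z, y⁆ = 0 := by
  unfold derivedFamily at hy
  induction hy using Submodule.span_induction with
  | zero => exact lie_zero _
  | add _ _ _ _ h₁ h₂ => rw [lie_add, h₁, h₂, add_zero]
  | smul r _ _ h => rw [lie_smul, h, smul_zero]
  | mem y hy =>
    obtain ⟨p, q, y₁, y₂, rfl, g₁, g₂, rfl⟩ := hy
    have key : ∀ {a b : G} {y₁ y₂ : L}, IsGen V ρ (d - 1) a y₁ → IsGen V ρ (d - 1) b y₂ →
        ρ c ≤ ρ (c * (a * b)) + 1 → ⁅⁅z, y₁⁆, y₂⁆ = 0 := by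
      intro a b y₁ y₂ g₁ g₂ h
      by_cases hc : ρ (c * a) ≤ ρ (c * a * b)
      · exact hV.lie_isGen_top hd g₂ (hV.lie_mem hz (hV.mem_of_isGen g₁)) hc
      · rw [mul_assoc] at hc
        rw [hV.lie_isGen_top hd g₁ hz (by omega), zero_lie]
    rw [leibniz_lie z y₁ y₂, ← lie_skew y₁ ⁅z, y₂⁆, key g₁ g₂ h,
      key g₂ g₁ (by rwa [mul_comm q p]), neg_zero, add_zero]

theorem genFamily_le (hV : IsCyclicGraded V ρ) (k : ℕ) : genFamily V ρ k ≤ V :=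
  fun _ _ hx ↦ hV.mem_of_isGen hx

theorem isCyclicGraded_genFamily (hV : IsCyclicGraded V ρ) (k : ℕ) :
    IsCyclicGraded (genFamily V ρ k) ρ where
  lie_mem hx hy := IsGen.lie hx hy
  sep hx hy := hV.sep (hV.genFamily_le k _ hx) (hV.genFamily_le k _ hy)

/-- The `(j + 1)`-st derived algebra of the subalgebra generated by the components of top rank
`d - 1` lives in ranks less than `d - 1 - 2 * j`. -/
theorem iterate_top (hV : IsCyclicGraded V ρ) {d : ℕ}
    (hd : ∀ a, ∀ x ∈ V a, x ≠ 0 → ρ a < d) (j : ℕ) : ∀ {a : G}, d ≤ ρ a + 2 * j + 1 →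
      derivedFamily^[j + 1] (genFamily V ρ (d - 1)) a = ⊥ := by
  have hE := hV.isCyclicGraded_genFamily (d - 1)
  induction j with
  | zero =>
    intro a ha
    rw [eq_bot_iff, zero_add, Function.iterate_one]
    refine derivedFamily_le_iff.2 fun p q x y hpq hx hy ↦ ?_
    subst hpq
    rw [Submodule.mem_bot]
    by_contra h0
    have h₁ := hd p x (hV.genFamily_le _ _ hx) (by rintro rfl; simp at h0)
    exact h0 (hV.lie_isGen_top hd hy (hV.genFamily_le _ _ hx) (by omega))
  | succ j ih =>
    intro a ha
    rw [eq_bot_iff, Function.iterate_succ_apply']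
    refine derivedFamily_le_iff.2 fun p q x y hpq hx hy ↦ ?_
    subst hpq
    rw [Submodule.mem_bot]
    by_contra h0
    have hp : ¬ d ≤ ρ p + 2 * j + 1 := by
      intro hp
      rw [ih hp, Submodule.mem_bot] at hx
      simp [hx] at h0
    have hy' : y ∈ derivedFamily (genFamily V ρ (d - 1)) q := by
      rw [Function.iterate_succ_apply'] at hy
      exact derivedFamily_mono (hE.iterate_le j) q hy
    exact h0 (hV.lie_derived_top hd hy' (hV.genFamily_le _ _ (hE.iterate_le _ _ hx)) (by omega))

/-- **Kreknin's theorem with Shalev's bound**: if all ranks are less than `d`, the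
`2 ^ (d - 1)`-st derived algebra vanishes. -/
theorem iterate_eq_bot (hV : IsCyclicGraded V ρ) {d : ℕ}
    (hd : ∀ a, ∀ x ∈ V a, x ≠ 0 → ρ a < d) (a : G) :
    derivedFamily^[2 ^ (d - 1)] V a = ⊥ := by
  obtain rfl | rfl | rfl | ⟨e, rfl⟩ : d = 0 ∨ d = 1 ∨ d = 2 ∨ ∃ e, d = e + 3 := by
    rcases d with _ | _ | _ | e
    · simp
    · simp
    · simp
    · exact .inr (.inr (.inr ⟨e, rfl⟩))
  · rw [eq_bot_iff]
    intro x hx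
    by_contra h0
    exact absurd (hd a x (hV.iterate_le _ _ hx) h0) (by omega)
  · have := hV.iterate_top hd 0 (a := a) (by omega)
    rw [eq_bot_iff, ← this]
    exact iterate_mono genFamily_zero 1 a
  · rw [eq_bot_iff]
    intro x hx
    have hx : IsGen V ρ 2 a x := hV.genFamily_two a hx
    rw [Submodule.mem_bot]
    clear * - hx hd
    induction hx with
    | of hk h =>
      by_contra h0
      exact absurd (hd _ _ h h0) (by omega)
    | zero => rfl
    | add _ _ h₁ h₂ => rw [h₁, h₂, add_zero]
    | smul c _ h => rw [h, smul_zero]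
    | lie _ _ h₁ h₂ => rw [h₁, zero_lie]
  · have h₁ := genFamily_add_two e V hV
    have h₂ := hV.iterate_top hd (e + 1) (a := a) (by omega)
    have hlt : e < 2 ^ e := Nat.lt_two_pow_self
    -- `2 ^ (e + 2) = (2 ^ e - (e + 1)) + (e + 2) + (3 * 2 ^ e - 1)`
    have e₁ : 2 ^ (e + 3 - 1) = (2 ^ e - (e + 1)) + ((e + 1 + 1) + (3 * 2 ^ e - 1)) := by
      rw [show e + 3 - 1 = e + 2 by omega, pow_add]; omega
    rw [eq_bot_iff, ← h₂, e₁, Function.iterate_add_apply, Function.iterate_add_apply]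
    have h₃ := iterate_mono h₁ (e + 1 + 1)
    refine le_trans ?_ (h₃ a)
    rw [← Function.iterate_add_apply _ (e + 1 + 1)]
    exact (hV.iterate _).iterate_le _ a

end IsCyclicGraded

end Kreknin
/-! ### The cyclic order on the nonzero complex numbers -/

section Order

/-- An argument of `z` in `[0, 2π]`. Positive reals get `0` if at least `1` and `2π` if less than
`1`, so that `cyclicKey` below lies strictly between `(0, 0)` and `(2π, 0)` for `z ≠ 0, 1`. -/
noncomputable def cyclicArg (z : ℂ) : ℝ :=
  if z.arg < 0 ∨ (z.arg = 0 ∧ Real.log ‖z‖ < 0) then z.arg + 2 * Real.pi else z.arg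

/-- The coordinate for the cyclic order on `ℂˣ`, the lexicographic product of the circle with the
ordered group of positive reals, cut open at `1`. -/
noncomputable def cyclicKey (z : ℂ) : ℝ ×ₗ ℝ := toLex (cyclicArg z, Real.log ‖z‖)

theorem cyclicArg_bounds {z : ℂ} (h0 : z ≠ 0) (h1 : z ≠ 1) :
    (0 < cyclicArg z ∨ (cyclicArg z = 0 ∧ 0 < Real.log ‖z‖)) ∧
    (cyclicArg z < 2 * Real.pi ∨ (cyclicArg z = 2 * Real.pi ∧ Real.log ‖z‖ < 0)) := by
  have hpi := Real.pi_pos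
  have h₁ := Complex.neg_pi_lt_arg z
  have h₂ := Complex.arg_le_pi z
  have hne : z.arg = 0 → Real.log ‖z‖ ≠ 0 := by
    intro ha hl
    have hn : ‖z‖ = 1 := by
      rw [← Real.exp_log (norm_pos_iff.2 h0), hl, Real.exp_zero]
    apply h1
    have := Complex.norm_mul_exp_arg_mul_I z
    rw [hn, ha] at this
    simpa using this.symm
  unfold cyclicArg
  split_ifs with h
  · rcases h with h | ⟨h, h'⟩
    · exact ⟨.inl (by linarith), .inl (by linarith)⟩
    · exact ⟨.inl (by linarith), .inr ⟨by linarith, h'⟩⟩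
  · push Not at h
    refine ⟨?_, .inl (by linarith)⟩
    rcases h.1.eq_or_lt with h' | h'
    · exact .inr ⟨h'.symm, lt_of_le_of_ne (h.2 h'.symm) (hne h'.symm).symm⟩
    · exact .inl h'

theorem exists_cyclicArg_mul {z w : ℂ} (hz : z ≠ 0) (hw : w ≠ 0) :
    ∃ k : ℤ, cyclicArg (z * w) = cyclicArg z + cyclicArg w + 2 * Real.pi * k := by
  have coe : ∀ z : ℂ, (cyclicArg z : Real.Angle) = z.arg := by
    intro z
    unfold cyclicArg
    split_ifs
    · simp
    · rfl
  have h : (cyclicArg (z * w) : Real.Angle) = ((cyclicArg z + cyclicArg w : ℝ) : Real.Angle) := by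
    rw [coe, Complex.arg_mul_coe_angle hz hw, Real.Angle.coe_add, coe, coe]
  obtain ⟨k, hk⟩ := Real.Angle.angle_eq_iff_two_pi_dvd_sub.1 h
  exact ⟨k, by linarith⟩

/-- For a lift to the cut-open cyclic group, a sum either does not wrap around, and exceeds both
summands, or wraps around once, and is below both. -/
theorem cyclicKey_mul {z w : ℂ} (hz : z ≠ 0) (hw : w ≠ 0) (hz1 : z ≠ 1) (hw1 : w ≠ 1)
    (hzw : z * w ≠ 1) :
    (cyclicKey (z * w) < cyclicKey z ∧ cyclicKey (z * w) < cyclicKey w) ∨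
    (cyclicKey z < cyclicKey (z * w) ∧ cyclicKey w < cyclicKey (z * w)) := by
  have hpi := Real.pi_pos
  obtain ⟨k, hk⟩ := exists_cyclicArg_mul hz hw
  have bz := cyclicArg_bounds hz hz1
  have bw := cyclicArg_bounds hw hw1
  have bzw := cyclicArg_bounds (mul_ne_zero hz hw) hzw
  have hl : Real.log ‖z * w‖ = Real.log ‖z‖ + Real.log ‖w‖ := by
    rw [norm_mul, Real.log_mul (norm_ne_zero_iff.2 hz) (norm_ne_zero_iff.2 hw)]
  simp only [cyclicKey, Prod.Lex.toLex_lt_toLex]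
  rw [hl] at bzw ⊢
  set A := cyclicArg z
  set B := cyclicArg w
  set C := cyclicArg (z * w)
  set l := Real.log ‖z‖
  set l' := Real.log ‖w‖
  have hA : 0 ≤ A ∧ A ≤ 2 * Real.pi := by
    constructor
    · rcases bz.1 with h | h <;> linarith
    · rcases bz.2 with h | h <;> linarith
  have hB : 0 ≤ B ∧ B ≤ 2 * Real.pi := by
    constructor
    · rcases bw.1 with h | h <;> linarith
    · rcases bw.2 with h | h <;> linarith
  have hC : 0 ≤ C ∧ C ≤ 2 * Real.pi := by
    constructor
    · rcases bzw.1 with h | h <;> linarith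
    · rcases bzw.2 with h | h <;> linarith
  have hk1 : (k : ℝ) < 2 := by nlinarith
  have hk2 : (-3 : ℝ) < k := by nlinarith
  have hk1 : k < 2 := by exact_mod_cast hk1
  have hk2 : -3 < k := by exact_mod_cast hk2
  obtain rfl | rfl | rfl | rfl : k = -2 ∨ k = -1 ∨ k = 0 ∨ k = 1 := by omega
  all_goals push_cast at hk
  · exfalso
    rcases bzw.1 with h | ⟨h, h'⟩
    · linarith
    · rcases bz.2 with g | ⟨g, g'⟩
      · linarith
      · rcases bw.2 with f | ⟨f, f'⟩ <;> linarith
  · left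
    constructor
    · rcases bw.2 with g | ⟨g, g'⟩
      · left; linarith
      · right; constructor <;> linarith
    · rcases bz.2 with g | ⟨g, g'⟩
      · left; linarith
      · right; constructor <;> linarith
  · right
    constructor
    · rcases bw.1 with g | ⟨g, g'⟩
      · left; linarith
      · right; constructor <;> linarith
    · rcases bz.1 with g | ⟨g, g'⟩
      · left; linarith
      · right; constructor <;> linarith
  · exfalso
    rcases bzw.2 with h | ⟨h, h'⟩
    · linarith
    · rcases bz.1 with g | ⟨g, g'⟩
      · linarith
      · rcases bw.1 with f | ⟨f, f'⟩ <;> linarith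

theorem exists_rank (S : Finset ℂ) (h0 : 0 ∉ S) (h1 : 1 ∉ S) :
    ∃ ρ : ℂ → ℕ, (∀ a ∈ S, ρ a < S.card) ∧
      ∀ a ∈ S, ∀ b ∈ S, a * b ∈ S →
        (ρ (a * b) < ρ a ∧ ρ (a * b) < ρ b) ∨ (ρ a < ρ (a * b) ∧ ρ b < ρ (a * b)) := by
  classical
  let ρ : ℂ → ℕ := fun a ↦ (S.filter fun t ↦ cyclicKey t < cyclicKey a).card
  have mono : ∀ a ∈ S, ∀ b, cyclicKey a < cyclicKey b → ρ a < ρ b := by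
    intro a ha b hab
    refine Finset.card_lt_card (Finset.ssubset_iff_of_subset ?_ |>.2 ⟨a, ?_, ?_⟩)
    · intro t ht
      rw [Finset.mem_filter] at ht ⊢
      exact ⟨ht.1, ht.2.trans hab⟩
    · simp [ha, hab]
    · simp
  refine ⟨ρ, fun a ha ↦ ?_, fun a ha b hb hab ↦ ?_⟩
  · exact Finset.card_lt_card (Finset.filter_ssubset.2 ⟨a, ha, lt_irrefl _⟩)
  · have ne0 : ∀ a ∈ S, a ≠ 0 := fun a ha h ↦ h0 (h ▸ ha)
    have ne1 : ∀ a ∈ S, a ≠ 1 := fun a ha h ↦ h1 (h ▸ ha)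
    rcases cyclicKey_mul (ne0 a ha) (ne0 b hb) (ne1 a ha) (ne1 b hb) (ne1 _ hab) with h | h
    · exact .inl ⟨mono _ hab _ h.1, mono _ hab _ h.2⟩
    · exact .inr ⟨mono _ ha _ h.1, mono _ hb _ h.2⟩

end Order

/-! ### Reduction of the dimension of the fixed-point space -/

section Main

open LieAlgebra

theorem map_mem_derivedSeriesOfIdeal {R L L' : Type*} [CommRing R] [LieRing L] [LieAlgebra R L]
    [LieRing L'] [LieAlgebra R L'] (f : L →ₗ⁅R⁆ L') {I : LieIdeal R L} {J : LieIdeal R L'}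
    (h : ∀ x ∈ I, f x ∈ J) (k : ℕ) :
    ∀ x ∈ derivedSeriesOfIdeal R L k I, f x ∈ derivedSeriesOfIdeal R L' k J := by
  induction k with
  | zero => exact h
  | succ k ih =>
    intro x hx
    rw [derivedSeriesOfIdeal_succ] at hx ⊢
    rw [← LieSubmodule.mem_toSubmodule, LieSubmodule.lieIdeal_oper_eq_linear_span'] at hx
    induction hx using Submodule.span_induction with
    | mem z hz =>
      obtain ⟨x, hx, y, hy, rfl⟩ := hz
      rw [LieHom.map_lie]
      exact LieSubmodule.lie_mem_lie (ih x hx) (ih y hy)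
    | zero => rw [map_zero]; exact zero_mem _
    | add x y _ _ hx hy => rw [map_add]; exact add_mem hx hy
    | smul c x _ hx => rw [map_smul]; exact SMulMemClass.smul_mem c hx

/-- The radical is a characteristic ideal. -/
theorem equiv_mem_radical {R L : Type*} [CommRing R] [LieRing L] [LieAlgebra R L]
    [IsNoetherian R L] (α : L ≃ₗ⁅R⁆ L) {x : L} (hx : x ∈ radical R L) : α x ∈ radical R L := by
  let J : LieIdeal R L := LieIdeal.comap α.symm.toLieHom (radical R L)
  have hJ : J ≤ radical R L := by
    rw [← LieIdeal.solvable_iff_le_radical, isSolvable_iff R]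
    obtain ⟨k, hk⟩ := IsSolvable.solvable R (radical R L)
    refine ⟨k, ?_⟩
    rw [LieIdeal.derivedSeries_eq_bot_iff] at hk ⊢
    rw [eq_bot_iff]
    intro y hy
    have := map_mem_derivedSeriesOfIdeal α.symm.toLieHom (I := J) (J := radical R L)
      (fun z hz ↦ LieIdeal.mem_comap.1 hz) k y hy
    rw [hk, LieSubmodule.mem_bot] at this
    rw [LieSubmodule.mem_bot]
    exact α.symm.injective (this.trans (map_zero α.symm).symm)
  refine hJ (LieIdeal.mem_comap.2 ?_)
  change α.symm (α x) ∈ _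
  rwa [α.symm_apply_apply]

theorem derivedSeries_le_iSup {R L L' G : Type*} [CommRing R] [LieRing L] [LieAlgebra R L]
    [LieRing L'] [LieAlgebra R L'] [CommSemigroup G] (f : L →ₗ⁅R⁆ L') {M : LieIdeal R L}
    {V : G → Submodule R L'} (h : ∀ x ∈ M, f x ∈ ⨆ a, V a) (k : ℕ) :
    ∀ x ∈ derivedSeriesOfIdeal R L k M, f x ∈ ⨆ a, derivedFamily^[k] V a := by
  induction k with
  | zero => exact h
  | succ k ih =>
    intro x hx
    rw [derivedSeriesOfIdeal_succ, ← LieSubmodule.mem_toSubmodule,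
      LieSubmodule.lieIdeal_oper_eq_linear_span'] at hx
    rw [Function.iterate_succ_apply']
    have key : ∀ x ∈ ⨆ a, derivedFamily^[k] V a, ∀ y ∈ ⨆ a, derivedFamily^[k] V a,
        ⁅x, y⁆ ∈ ⨆ a, derivedFamily (derivedFamily^[k] V) a := by
      intro x hx y hy
      induction hx using Submodule.iSup_induction' with
      | mem a x hx =>
        induction hy using Submodule.iSup_induction' with
        | mem b y hy =>
          exact Submodule.mem_iSup_of_mem (a * b) (lie_mem_derivedFamily hx hy)
        | zero => rw [lie_zero]; exact zero_mem _
        | add y z _ _ hy hz => rw [lie_add]; exact add_mem hy hz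
      | zero => rw [zero_lie]; exact zero_mem _
      | add x z _ _ hx hz => rw [add_lie]; exact add_mem hx hz
    induction hx using Submodule.span_induction with
    | mem z hz =>
      obtain ⟨x, hx, y, hy, rfl⟩ := hz
      rw [LieHom.map_lie]
      exact key _ (ih x hx) _ (ih y hy)
    | zero => rw [map_zero]; exact zero_mem _
    | add x y _ _ hx hy => rw [map_add]; exact add_mem hx hy
    | smul c x _ hx => rw [map_smul]; exact Submodule.smul_mem _ c hx

variable {g : Type*} [LieRing g] [LieAlgebra ℂ g] [FiniteDimensional ℂ g]

/-- Kreknin's theorem relative to an ideal `N` containing the fixed points of `α` on the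
`α`-stable ideal `M`: it is applied to the image of `M` in `g ⧸ N`, where the component of degree
one vanishes. -/
theorem derivedSeriesOfIdeal_le_of_fixed_le (α : g ≃ₗ⁅ℂ⁆ g) {n : ℕ}
    (hss : Module.End.IsSemisimple (α.toLinearEquiv : g →ₗ[ℂ] g))
    (heig : {μ : ℂ | Module.End.HasEigenvalue (α.toLinearEquiv : g →ₗ[ℂ] g) μ}.ncard = n)
    (M N : LieIdeal ℂ g) (hM : ∀ x ∈ M, α x ∈ M)
    (hN : ∀ x ∈ M, α x = x → x ∈ N) :
    derivedSeriesOfIdeal ℂ g (2 ^ (n - 1)) M ≤ N := by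
  classical
  set T : Module.End ℂ g := (α.toLinearEquiv : g →ₗ[ℂ] g) with hT
  have hTα : ∀ x, T x = α x := fun _ ↦ rfl
  have hfin : {μ : ℂ | T.HasEigenvalue μ}.Finite := Module.End.finite_hasEigenvalue T
  let S : Finset ℂ := hfin.toFinset.erase 1
  have hScard : S.card ≤ n := by
    rw [← heig, Set.ncard_eq_toFinset_card _ hfin]
    exact Finset.card_erase_le
  have h0 : (0 : ℂ) ∉ S := by
    intro h
    simp only [S, Finset.mem_erase, Set.Finite.mem_toFinset, Set.mem_ofPred_eq] at h
    obtain ⟨v, hv, hv0⟩ := h.2.exists_hasEigenvector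
    rw [Module.End.mem_eigenspace_iff, zero_smul, hTα] at hv
    exact hv0 (α.injective (hv.trans (map_zero α).symm))
  obtain ⟨ρ, hρ, hsep⟩ := exists_rank S h0 (Finset.notMem_erase _ _)
  let π : g →ₗ⁅ℂ⁆ (g ⧸ N) :=
    { (LieSubmodule.Quotient.mk' N : g →ₗ[ℂ] (g ⧸ N)) with
      map_lie' := fun {x y} ↦ LieSubmodule.Quotient.mk_bracket N x y }
  have hπ : ∀ x, π x = 0 ↔ x ∈ N := fun x ↦ LieSubmodule.Quotient.mk_eq_zero N
  let V : ℂ → Submodule ℂ (g ⧸ N) := fun a ↦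
    (M.toSubmodule ⊓ T.eigenspace a).map (π : g →ₗ[ℂ] (g ⧸ N))
  have memV : ∀ {a x}, x ∈ V a → ∃ y ∈ M, α y = a • y ∧ π y = x := by
    rintro a x ⟨y, ⟨hy, hy'⟩, rfl⟩
    exact ⟨y, hy, Module.End.mem_eigenspace_iff.1 hy', rfl⟩
  have Vmem : ∀ {a y}, y ∈ M → α y = a • y → π y ∈ V a := fun hy hy' ↦
    ⟨_, ⟨hy, Module.End.mem_eigenspace_iff.2 hy'⟩, rfl⟩
  -- only degrees in `S` carry a nonzero component of the quotient
  have supp : ∀ {a x}, x ∈ V a → x ≠ 0 → a ∈ S := by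
    intro a x hx hx0
    obtain ⟨y, hy, hay, rfl⟩ := memV hx
    rw [ne_eq, hπ] at hx0
    simp only [S, Finset.mem_erase, Set.Finite.mem_toFinset, Set.mem_ofPred_eq]
    constructor
    · rintro rfl
      exact hx0 (hN y hy (by rw [hay, one_smul]))
    · refine Module.End.hasEigenvalue_of_hasEigenvector (x := y)
        ⟨Module.End.mem_eigenspace_iff.2 hay, ?_⟩
      rintro rfl
      exact hx0 (zero_mem _)
  have lie_mem : ∀ {a b x y}, x ∈ V a → y ∈ V b → ⁅x, y⁆ ∈ V (a * b) := by
    intro a b x y hx hy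
    obtain ⟨u, -, hu, rfl⟩ := memV hx
    obtain ⟨v, hvM, hv, rfl⟩ := memV hy
    rw [← LieHom.map_lie]
    refine Vmem (lie_mem_right ℂ g M u v hvM) ?_
    rw [LieEquiv.map_lie, hu, hv, smul_lie, lie_smul, smul_smul]
  have hV : IsCyclicGraded V ρ :=
    { lie_mem := lie_mem
      sep := by
        intro a b x y hx hy h
        refine hsep a (supp hx ?_) b (supp hy ?_) (supp (lie_mem hx hy) h)
        · rintro rfl; exact h (zero_lie _)
        · rintro rfl; exact h (lie_zero _) }
  have hsum : ∀ x ∈ M, π x ∈ ⨆ a, V a := by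
    intro x hx
    have e := Submodule.eq_iSup_inf_genEigenspace (f := T) (p := M.toSubmodule) 1 hM
      hss.iSup_eigenspace_eq_top
    have hx' : x ∈ M.toSubmodule := hx
    rw [e] at hx'
    have := Submodule.mem_map_of_mem (f := (π : g →ₗ[ℂ] (g ⧸ N))) hx'
    rwa [Submodule.map_iSup] at this
  have hbot := fun a ↦ hV.iterate_eq_bot (d := n)
    (fun a x hx hx0 ↦ (hρ a (supp hx hx0)).trans_le hScard) a
  intro x hx
  have := derivedSeries_le_iSup π hsum (2 ^ (n - 1)) x hx
  simp only [hbot, iSup_bot, Submodule.mem_bot] at this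
  exact (hπ x).1 this

/-- If the fixed points of `α` in the `j`-th derived ideal of a solvable `α`-stable ideal `I` have
dimension at most `m`, the asserted number of further derivations kills it. Either the fixed points
drop in dimension after `K + 1` derivations, `K = 2 ^ (n - 1)`, or they all lie in the
`(j + K + 1)`-st derived ideal, which then equals the `(j + K)`-th one. -/
theorem derivedSeriesOfIdeal_eq_bot (α : g ≃ₗ⁅ℂ⁆ g) {n : ℕ}
    (hss : Module.End.IsSemisimple (α.toLinearEquiv : g →ₗ[ℂ] g))
    (heig : {μ : ℂ | Module.End.HasEigenvalue (α.toLinearEquiv : g →ₗ[ℂ] g) μ}.ncard = n)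
    (I : LieIdeal ℂ g) (hI : ∀ x ∈ I, α x ∈ I) {s : ℕ} (hs : derivedSeriesOfIdeal ℂ g s I = ⊥)
    (m : ℕ) : ∀ j : ℕ, Module.finrank ℂ ↥((derivedSeriesOfIdeal ℂ g j I).toSubmodule ⊓
        Module.End.eigenspace (α.toLinearEquiv : g →ₗ[ℂ] g) 1) ≤ m →
      derivedSeriesOfIdeal ℂ g (j + ((m + 1) * 2 ^ (n - 1) + m)) I = ⊥ := by
  set K := 2 ^ (n - 1) with hK
  have stable : ∀ j, ∀ x ∈ derivedSeriesOfIdeal ℂ g j I, α x ∈ derivedSeriesOfIdeal ℂ g j I :=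
    fun j ↦ map_mem_derivedSeriesOfIdeal α.toLieHom hI j
  have rel : ∀ (j : ℕ) (N : LieIdeal ℂ g),
      (∀ x ∈ derivedSeriesOfIdeal ℂ g j I, α x = x → x ∈ N) →
      derivedSeriesOfIdeal ℂ g (j + K) I ≤ N := by
    intro j N hN
    rw [add_comm, derivedSeriesOfIdeal_add]
    exact derivedSeriesOfIdeal_le_of_fixed_le α hss heig _ N (stable j) hN
  have fix : ∀ x, x ∈ Module.End.eigenspace (α.toLinearEquiv : g →ₗ[ℂ] g) 1 ↔ α x = x := by
    intro x
    rw [Module.End.mem_eigenspace_iff, one_smul]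
    rfl
  induction m with
  | zero =>
    intro j hj
    rw [eq_bot_iff, zero_add, one_mul, add_zero]
    refine rel j ⊥ fun x hx hx' ↦ ?_
    rw [Nat.le_zero, Submodule.finrank_eq_zero] at hj
    exact (Submodule.eq_bot_iff _).1 hj x ⟨hx, (fix x).2 hx'⟩
  | succ m ih =>
    intro j hj
    by_cases hdrop : Module.finrank ℂ ↥((derivedSeriesOfIdeal ℂ g (j + (K + 1)) I).toSubmodule ⊓
        Module.End.eigenspace (α.toLinearEquiv : g →ₗ[ℂ] g) 1) ≤ m
    · have := ih _ hdrop
      rwa [show j + (K + 1) + ((m + 1) * K + m) = j + ((m + 1 + 1) * K + (m + 1)) by ring] at this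
    · have hle : (derivedSeriesOfIdeal ℂ g (j + (K + 1)) I).toSubmodule ⊓
          Module.End.eigenspace (α.toLinearEquiv : g →ₗ[ℂ] g) 1 ≤
          (derivedSeriesOfIdeal ℂ g j I).toSubmodule ⊓
          Module.End.eigenspace (α.toLinearEquiv : g →ₗ[ℂ] g) 1 :=
        inf_le_inf_right _ (derivedSeriesOfIdeal_antitone I (Nat.le_add_right _ _))
      have heq := Submodule.eq_of_le_of_finrank_le hle (by omega)
      have hstep : derivedSeriesOfIdeal ℂ g (j + K) I ≤
          derivedSeriesOfIdeal ℂ g (j + K + 1) I :=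
        rel j _ fun x hx hx' ↦ (heq.ge ⟨hx, (fix x).2 hx'⟩).1
      have hconst : ∀ i, derivedSeriesOfIdeal ℂ g (j + K) I ≤
          derivedSeriesOfIdeal ℂ g (j + K + i) I := by
        intro i
        induction i with
        | zero => exact le_rfl
        | succ i ih' =>
          refine hstep.trans ?_
          rw [← add_assoc, derivedSeriesOfIdeal_succ, derivedSeriesOfIdeal_succ]
          exact LieSubmodule.mono_lie ih' ih'
      have hbot : derivedSeriesOfIdeal ℂ g (j + K) I ≤ ⊥ := by
        rw [← hs]
        exact (hconst s).trans (derivedSeriesOfIdeal_antitone I (Nat.le_add_left _ _))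
      rw [eq_bot_iff]
      refine le_trans (derivedSeriesOfIdeal_antitone I ?_) hbot
      have : K ≤ (m + 1 + 1) * K := Nat.le_mul_of_pos_left _ (by omega)
      omega

end Main

end ShalevBound

/-- Let `g` be a finite-dimensional Lie algebra over `ℂ` with solvable radical `r`, and let
`α` be a semisimple automorphism of `g` having exactly `n` distinct eigenvalues and whose
fixed-point subalgebra has dimension `m`. Then the derived length of `r` is at most
`(m + 1) * 2 ^ (n - 1) + m`, i.e. the corresponding term of the derived series of `r`
vanishes. -/
theorem derivedLength_radical_le_shalev_bound
    (g : Type*) [LieRing g] [LieAlgebra ℂ g] [FiniteDimensional ℂ g]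
    (α : g ≃ₗ⁅ℂ⁆ g) (n m : ℕ)
    (hss : Module.End.IsSemisimple (α.toLinearEquiv : g →ₗ[ℂ] g))
    (heig : {μ : ℂ | Module.End.HasEigenvalue (α.toLinearEquiv : g →ₗ[ℂ] g) μ}.ncard = n)
    (hfix : Module.finrank ℂ ↥(Module.End.eigenspace (α.toLinearEquiv : g →ₗ[ℂ] g) 1) = m) :
    LieAlgebra.derivedSeries ℂ ↥(LieAlgebra.radical ℂ g) ((m + 1) * 2 ^ (n - 1) + m) = ⊥ := by
  obtain ⟨s, hs⟩ := LieAlgebra.IsSolvable.solvable ℂ (LieAlgebra.radical ℂ g)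
  rw [LieIdeal.derivedSeries_eq_bot_iff] at hs ⊢
  have h := ShalevBound.derivedSeriesOfIdeal_eq_bot α hss heig (LieAlgebra.radical ℂ g)
    (fun _ ↦ ShalevBound.equiv_mem_radical α) hs m 0
    ((Submodule.finrank_mono inf_le_right).trans hfix.le)
  rwa [zero_add] at h
end

section
/- Let g be a finite-dimensional Lie algebra over ℂ with solvable radical r, and let α be a semisimple automorphism of g having exactly n distinct eigenvalues and whose fixed-point subalgebra has dimension m. Then the derived length of r is at most (m + 1)·2^n + m. -/
/-! The eigenspaces of `α` grade `g` by `ℂˣ`, and the radical `r` and its derived ideals `D k` are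
homogeneous. The argument has two ingredients.

*Kreknin's theorem, relative to an ideal.* Let `J` be a homogeneous ideal and `H` a homogeneous
ideal whose component of weight `1` lies in `J`. If there are at most `n` weights, then
`H^(2 ^ n) ≤ J`. Weights other than `1` are removed one at a time from the set of weights of
generators of a subalgebra containing a derived ideal of `H`, each removal costing one step
`N ↦ 2 * N + 1` in the derived length (`bracket_inf_weight_le`, `kreknin_aux`). The order of
removal must be such that in `b * c = a` the weights `b`, `c` lie on the same side of `a`; such
an order exists because `ℂˣ`, being the quotient of the lexicographically ordered group `ℝ × ℝ`
by `ℤ × 0` through `(x, t) ↦ exp (t + 2πix)`, is cyclically ordered: cut the cyclic order at `1`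
(`exists_weight_order`).

*Counting.* Put `f = 2 ^ n`. If the weight-`1` components of `D k` and `D (k + f + 1)` coincide,
Kreknin's theorem with `H = D k` and `J = D (k + f + 1)` gives `D (k + f) = D (k + f + 1)`, so
`D (k + f) = 0` by solvability. Hence, as long as this does not occur, the dimension of the
weight-`1` component, at most `m` at the start, drops every `f + 1` steps; once it is `0`, the
next `f` steps kill the ideal. This totals `m * (f + 1) + f = (m + 1) * f + m`. -/

open LieAlgebra Module.End

/-! ### A cyclic order on the nonzero complex numbers -/

/-- Every `z ≠ 0, 1` has a preimage under `(x, t) ↦ exp (t + 2πix)` lying strictly between `(0, 0)`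
and `(1, 0)` lexicographically. -/
lemma exists_lift (z : ℂ) (h0 : z ≠ 0) (h1 : z ≠ 1) :
    ∃ p : ℝ × ℝ, Complex.exp (p.2 + p.1 * (2 * Real.pi * Complex.I)) = z ∧
      (0 < p.1 ∨ p.1 = 0 ∧ 0 < p.2) ∧ (p.1 < 1 ∨ p.1 = 1 ∧ p.2 < 0) := by
  obtain ⟨y, t, h⟩ : ∃ y t : ℝ, Complex.exp (t + y * (2 * Real.pi * Complex.I)) = z := by
    refine ⟨(Complex.log z).im / (2 * Real.pi), (Complex.log z).re, ?_⟩
    have : (2 * Real.pi : ℂ) ≠ 0 := by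
      exact_mod_cast (by positivity : (2 * Real.pi : ℝ) ≠ 0)
    conv_rhs => rw [← Complex.exp_log h0, ← Complex.re_add_im (Complex.log z)]
    congr 1
    push_cast
    field_simp
  have key : ∀ k : ℤ,
      Complex.exp (t + ((y + k : ℝ) : ℂ) * (2 * Real.pi * Complex.I)) = z := by
    intro k
    rw [← h, Complex.exp_eq_exp_iff_exists_int]
    exact ⟨k, by push_cast; ring⟩
  have hf : Int.fract y = y + ((-⌊y⌋ : ℤ) : ℝ) := by
    rw [Int.fract]; push_cast; ring
  rcases (Int.fract_nonneg y).lt_or_eq with hy | hy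
  · exact ⟨(Int.fract y, t), by rw [hf]; exact key _, Or.inl hy, Or.inl (Int.fract_lt_one y)⟩
  · rcases lt_trichotomy t 0 with ht | ht | ht
    · refine ⟨(1, t), ?_, Or.inl one_pos, Or.inr ⟨rfl, ht⟩⟩
      have := key (-⌊y⌋ + 1)
      have h2 : y + ((-⌊y⌋ + 1 : ℤ) : ℝ) = 1 := by push_cast at hf ⊢; linarith
      rwa [h2] at this
    · exfalso
      have := key (-⌊y⌋)
      rw [← hf, ← hy, ht] at this
      simp at this
      exact h1 this.symm
    · refine ⟨(0, t), ?_, Or.inr ⟨rfl, ht⟩, Or.inl one_pos⟩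
      have := key (-⌊y⌋)
      rwa [← hf, ← hy] at this

/-- Cutting the cyclic order of `ℂˣ` at `1`: if `b * c = a`, then `b` and `c` are on the same side
of `a`. -/
lemma exists_weight_order : ∃ rk : ℂ → ℝ ×ₗ ℝ,
    (∀ a b, a ≠ 0 → a ≠ 1 → b ≠ 0 → b ≠ 1 → rk a = rk b → a = b) ∧
    (∀ a b c, a ≠ 0 → a ≠ 1 → b ≠ 0 → b ≠ 1 → c ≠ 0 → c ≠ 1 → b * c = a →
      rk a < rk c → rk a < rk b) := by
  have H : ∀ z : ℂ, ∃ p : ℝ × ℝ, z ≠ 0 → z ≠ 1 →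
      (Complex.exp (p.2 + p.1 * (2 * Real.pi * Complex.I)) = z ∧
      (0 < p.1 ∨ p.1 = 0 ∧ 0 < p.2) ∧ (p.1 < 1 ∨ p.1 = 1 ∧ p.2 < 0)) := by
    intro z
    by_cases h0 : z = 0
    · exact ⟨0, fun h => absurd h0 h⟩
    by_cases h1 : z = 1
    · exact ⟨0, fun _ h => absurd h1 h⟩
    obtain ⟨p, hp⟩ := exists_lift z h0 h1
    exact ⟨p, fun _ _ => hp⟩
  choose q hq using H
  refine ⟨fun z => toLex (q z), ?_, ?_⟩
  · intro a b ha0 ha1 hb0 hb1 hab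
    have hab' : q a = q b := toLex.injective hab
    rw [← (hq a ha0 ha1).1, ← (hq b hb0 hb1).1, hab']
  · intro a b c ha0 ha1 hb0 hb1 hc0 hc1 habc hlt
    obtain ⟨ea, la, ua⟩ := hq a ha0 ha1
    obtain ⟨eb, lb, ub⟩ := hq b hb0 hb1
    obtain ⟨ec, lc, uc⟩ := hq c hc0 hc1
    rw [Prod.Lex.toLex_lt_toLex] at hlt ⊢
    rw [← ea, ← eb, ← ec, ← Complex.exp_add, Complex.exp_eq_exp_iff_exists_int] at habc
    obtain ⟨k, hk⟩ := habc
    have hre := congrArg Complex.re hk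
    have him := congrArg Complex.im hk
    simp at hre him
    have hx : (q b).1 + (q c).1 = (q a).1 + k := by
      have : (2 * Real.pi) ≠ 0 := by positivity
      apply mul_right_cancel₀ this
      linarith
    generalize (q a).1 = xa at *
    generalize (q b).1 = xb at *
    generalize (q c).1 = xc at *
    have hb : 0 ≤ xb := by rcases lb with h | h <;> linarith
    have hc : xc ≤ 1 := by rcases uc with h | h <;> linarith
    -- `k ≤ 0` means that `b * c = a` already holds for the lifts, so that `c` lies before `a`.
    rcases le_or_gt k 0 with hk0 | hk0
    · have hkr : (k : ℝ) ≤ 0 := by exact_mod_cast hk0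
      exfalso
      rcases hlt with h | ⟨h, h'⟩
      · linarith
      · rcases lb with h2 | ⟨h2, h3⟩ <;> linarith
    · have hkr : (1 : ℝ) ≤ k := by exact_mod_cast hk0
      rcases uc with h | ⟨h, h'⟩
      · left; linarith
      · rcases (show xa ≤ xb by linarith).lt_or_eq with h2 | h2
        · exact Or.inl h2
        · exact Or.inr ⟨h2, by linarith⟩

/-! ### Homogeneous ideals -/

section Graded

variable {g : Type*} [LieRing g] [LieAlgebra ℂ g]

/-- An ideal is homogeneous for the family of subspaces `V` if it is spanned by its intersections
with the `V μ`. -/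
def HomogIdeal (V : ℂ → Submodule ℂ g) (I : LieIdeal ℂ g) : Prop :=
  I.toSubmodule ≤ ⨆ μ, I.toSubmodule ⊓ V μ

lemma HomogIdeal.lie {V : ℂ → Submodule ℂ g}
    (hV : ∀ a b x y, x ∈ V a → y ∈ V b → ⁅x, y⁆ ∈ V (a * b))
    {I : LieIdeal ℂ g} (hI : HomogIdeal V I) : HomogIdeal V ⁅I, I⁆ := by
  unfold HomogIdeal
  rw [LieSubmodule.lieIdeal_oper_eq_linear_span']
  rw [Submodule.span_le]
  rintro _ ⟨x, hx, y, hy, rfl⟩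
  rw [← LieSubmodule.lieIdeal_oper_eq_linear_span']
  change ⁅x, y⁆ ∈ ⨆ μ, (⁅I, I⁆ : LieIdeal ℂ g).toSubmodule ⊓ V μ
  refine Submodule.iSup_induction _
    (motive := fun x => ⁅x, y⁆ ∈ ⨆ μ, (⁅I, I⁆ : LieIdeal ℂ g).toSubmodule ⊓ V μ) (hI hx)
    (fun a x hxa => ?_) (by simp) (fun x x' h h' => by rw [add_lie]; exact add_mem h h')
  refine Submodule.iSup_induction _
    (motive := fun y => ⁅x, y⁆ ∈ ⨆ μ, (⁅I, I⁆ : LieIdeal ℂ g).toSubmodule ⊓ V μ) (hI hy)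
    (fun b y hyb => ?_) (by simp) (fun y y' h h' => by rw [lie_add]; exact add_mem h h')
  exact Submodule.mem_iSup_of_mem (a * b)
    ⟨LieSubmodule.lie_mem_lie hxa.1 hyb.1, hV _ _ _ _ hxa.2 hyb.2⟩

lemma HomogIdeal.derived {V : ℂ → Submodule ℂ g}
    (hV : ∀ a b x y, x ∈ V a → y ∈ V b → ⁅x, y⁆ ∈ V (a * b))
    {I : LieIdeal ℂ g} (hI : HomogIdeal V I) (k : ℕ) :
    HomogIdeal V (derivedSeriesOfIdeal ℂ g k I) := by
  induction k with
  | zero => exact hI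
  | succ k ih => rw [derivedSeriesOfIdeal_succ]; exact ih.lie hV

/-! ### Kreknin's theorem -/

/-- The subalgebra generated by the ideal `J` and the components of `H` with weights in `T`. -/
def genSub (V : ℂ → Submodule ℂ g) (J H : LieIdeal ℂ g) (T : Finset ℂ) : LieSubalgebra ℂ g :=
  LieSubalgebra.lieSpan ℂ g ({x | ∃ a ∈ T, x ∈ H ∧ x ∈ V a} ∪ {x | x ∈ J})

lemma genSub_empty (V : ℂ → Submodule ℂ g) (J H : LieIdeal ℂ g) {x : g}
    (hx : x ∈ genSub V J H ∅) : x ∈ J := by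
  have : genSub V J H ∅ ≤ J.toLieSubalgebra := by
    unfold genSub
    rw [LieSubalgebra.lieSpan_le]
    rintro x (⟨a, ha, -⟩ | hx)
    · simp at ha
    · exact hx
  exact this hx

/-- Modulo the weight spaces `V b` with `b ≠ a`, bracketing `H` with the subalgebra generated by the
weights `insert a T` lands in the subalgebra generated by the weights `T`. By the Jacobi identity it
suffices to bracket a homogeneous `u ∈ H` with a single generator, of weight `l` say, the product
having weight `a`. If `l = a`, then `u` has weight `1` and lies in `J`; if `l ∈ T`, then `u` has
weight in `T` by `hT`. -/
lemma lie_genSub_insert_mem {V : ℂ → Submodule ℂ g}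
    (hV : ∀ a b x y, x ∈ V a → y ∈ V b → ⁅x, y⁆ ∈ V (a * b))
    {S T : Finset ℂ} (hS : ∀ μ, μ ∉ S → μ ≠ 1 → V μ = ⊥)
    {J H : LieIdeal ℂ g} (hJ : HomogIdeal V J) (hH : HomogIdeal V H)
    (h1 : ∀ x ∈ H, x ∈ V 1 → x ∈ J) {a : ℂ} (ha0 : a ≠ 0)
    (hT : ∀ l ∈ T, ∀ b ∈ S, b * l = a → b ∈ T) (haT : a ∉ T)
    {y : g} (hy : y ∈ genSub V J H (insert a T)) :
    ∀ u ∈ H, ⁅u, y⁆ ∈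
      ((genSub V J H T).toSubmodule ⊓ V a) ⊔ ⨆ b, ⨆ _ : b ≠ a, V b := by
  have hJQ : J.toSubmodule ≤
      ((genSub V J H T).toSubmodule ⊓ V a) ⊔ ⨆ b, ⨆ _ : b ≠ a, V b := by
    refine hJ.trans (iSup_le fun b => ?_)
    by_cases hb : b = a
    · subst hb
      refine le_sup_of_le_left (inf_le_inf_right _ fun x hx => ?_)
      exact LieSubalgebra.subset_lieSpan (Or.inr hx)
    · exact le_sup_of_le_right (inf_le_right.trans (le_iSup₂_of_le b hb le_rfl))
  unfold genSub at hy
  induction hy using LieSubalgebra.lieSpan_induction with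
  | zero => intro u _; simp
  | add y y' _ _ h h' => intro u hu; rw [lie_add]; exact add_mem (h u hu) (h' u hu)
  | smul c y _ h => intro u hu; rw [lie_smul]; exact Submodule.smul_mem _ _ (h u hu)
  | lie y y' _ _ h h' =>
    intro u hu
    rw [leibniz_lie, ← lie_skew y ⁅u, y'⁆, ← sub_eq_add_neg]
    exact sub_mem (h' _ (lie_mem_left ℂ g H _ _ hu)) (h _ (lie_mem_left ℂ g H _ _ hu))
  | mem y hy =>
    intro u hu
    rcases hy with ⟨l, hl, hyH, hyl⟩ | hy
    · refine Submodule.iSup_induction _ (motive := fun u => ⁅u, y⁆ ∈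
        ((genSub V J H T).toSubmodule ⊓ V a) ⊔ ⨆ b, ⨆ _ : b ≠ a, V b) (hH hu)
        (fun b u hub => ?_) (by simp) (fun u u' h h' => by rw [add_lie]; exact add_mem h h')
      have hbl := hV _ _ _ _ hub.2 hyl
      by_cases hb : b * l = a
      · by_cases hb1 : b = 1
        · exact hJQ (lie_mem_left ℂ g J _ _ (h1 u hub.1 (hb1 ▸ hub.2)))
        · by_cases hbS : b ∈ S
          · have hlT : l ∈ T := by
              rcases Finset.mem_insert.1 hl with rfl | h
              · exact absurd (mul_right_cancel₀ ha0 (hb.trans (one_mul _).symm)) hb1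
              · exact h
            have hbT := hT l hlT b hbS hb
            refine Submodule.mem_sup_left ⟨?_, hb ▸ hbl⟩
            exact LieSubalgebra.lie_mem _
              (LieSubalgebra.subset_lieSpan (Or.inl ⟨b, hbT, hub⟩))
              (LieSubalgebra.subset_lieSpan (Or.inl ⟨l, hlT, hyH, hyl⟩))
          · have : u = 0 := by have := hub.2; rwa [hS b hbS hb1] at this
            simp [this]
      · exact Submodule.mem_sup_right
          (Submodule.mem_iSup_of_mem _ (Submodule.mem_iSup_of_mem hb hbl))
    · exact hJQ (lie_mem_right ℂ g J _ _ hy)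

/-- Once `K ≤ H` is generated by the weights `insert a T`, the weight-`a` component of its derived
ideal is generated by the weights `T`. -/
lemma bracket_inf_weight_le {V : ℂ → Submodule ℂ g} (hind : iSupIndep V)
    (hV : ∀ a b x y, x ∈ V a → y ∈ V b → ⁅x, y⁆ ∈ V (a * b))
    {S T : Finset ℂ} (hS : ∀ μ, μ ∉ S → μ ≠ 1 → V μ = ⊥)
    {J H K : LieIdeal ℂ g} (hJ : HomogIdeal V J) (hH : HomogIdeal V H)
    (h1 : ∀ x ∈ H, x ∈ V 1 → x ∈ J) {a : ℂ} (ha0 : a ≠ 0)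
    (hT : ∀ l ∈ T, ∀ b ∈ S, b * l = a → b ∈ T) (haT : a ∉ T)
    (hKH : K ≤ H) (hK : ∀ x ∈ K, x ∈ genSub V J H (insert a T))
    {x : g} (hx : x ∈ ⁅K, K⁆) (hxa : x ∈ V a) : x ∈ genSub V J H T := by
  have hQ : x ∈ ((genSub V J H T).toSubmodule ⊓ V a) ⊔ ⨆ b, ⨆ _ : b ≠ a, V b := by
    have : (⁅K, K⁆ : LieIdeal ℂ g).toSubmodule ≤
        ((genSub V J H T).toSubmodule ⊓ V a) ⊔ ⨆ b, ⨆ _ : b ≠ a, V b := by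
      rw [LieSubmodule.lieIdeal_oper_eq_linear_span', Submodule.span_le]
      rintro _ ⟨u, hu, y, hy, rfl⟩
      exact lie_genSub_insert_mem hV hS hJ hH h1 ha0 hT haT (hK y hy) u (hKH hu)
    exact this hx
  obtain ⟨p, hp, w, hw, rfl⟩ := Submodule.mem_sup.1 hQ
  have hwa : w ∈ V a := by
    have := sub_mem hxa hp.2
    rwa [add_sub_cancel_left] at this
  have hw0 : w = 0 := by
    have := (hind a).le_bot (show w ∈ V a ⊓ ⨆ b, ⨆ _ : b ≠ a, V b from ⟨hwa, hw⟩)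
    simpa using this
  rw [hw0, add_zero]
  exact hp.1

/-- If the final segment `T` for the order `rk` omits `k` of the weights in `S`, then `2 ^ k - 1`
derived steps take `H` into the subalgebra generated by the weights in `T`. The last weight removed
is the one immediately preceding `T`. -/
lemma kreknin_aux {V : ℂ → Submodule ℂ g} (hind : iSupIndep V)
    (hV : ∀ a b x y, x ∈ V a → y ∈ V b → ⁅x, y⁆ ∈ V (a * b))
    {S : Finset ℂ} (hS : ∀ μ, μ ∉ S → μ ≠ 1 → V μ = ⊥)
    (hS0 : ∀ μ ∈ S, μ ≠ 0) (hS1 : ∀ μ ∈ S, μ ≠ 1)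
    {rk : ℂ → ℝ ×ₗ ℝ}
    (hinj : ∀ a b, a ≠ 0 → a ≠ 1 → b ≠ 0 → b ≠ 1 → rk a = rk b → a = b)
    (hrk : ∀ a b c, a ≠ 0 → a ≠ 1 → b ≠ 0 → b ≠ 1 → c ≠ 0 → c ≠ 1 → b * c = a →
      rk a < rk c → rk a < rk b)
    {J : LieIdeal ℂ g} (hJ : HomogIdeal V J) (k : ℕ) :
    ∀ (T : Finset ℂ), T ⊆ S → (∀ x ∈ T, ∀ y ∈ S, rk x ≤ rk y → y ∈ T) → (S \ T).card = k →
    ∀ (H : LieIdeal ℂ g), HomogIdeal V H → (∀ x ∈ H, x ∈ V 1 → x ∈ J) →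
    ∀ x ∈ derivedSeriesOfIdeal ℂ g (2 ^ k - 1) H, x ∈ genSub V J H T := by
  induction k with
  | zero =>
    intro T hTS _ hc H hH h1 x hx
    have hST : S ⊆ T := Finset.sdiff_eq_empty_iff_subset.1 (Finset.card_eq_zero.1 hc)
    have hle : H.toSubmodule ≤ (genSub V J H T).toSubmodule := by
      refine hH.trans (iSup_le fun b y hy => ?_)
      by_cases hb1 : b = 1
      · exact LieSubalgebra.subset_lieSpan (Or.inr (h1 y hy.1 (hb1 ▸ hy.2)))
      by_cases hb : b ∈ S
      · exact LieSubalgebra.subset_lieSpan (Or.inl ⟨b, hST hb, hy⟩)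
      · have : y = 0 := by have := hy.2; rwa [hS b hb hb1] at this
        rw [this]; exact zero_mem _
    exact hle (by simpa using hx)
  | succ k ih =>
    intro T hTS hup hc H hH h1 x hx
    obtain ⟨a, ha, hmax⟩ := Finset.exists_max_image (S \ T) rk
      (Finset.card_pos.1 (by omega))
    obtain ⟨haS, haT⟩ := Finset.mem_sdiff.1 ha
    have hsub : insert a T ⊆ S := Finset.insert_subset haS hTS
    have hup' : ∀ x ∈ insert a T, ∀ y ∈ S, rk x ≤ rk y → y ∈ insert a T := by
      intro x hx y hy hxy
      by_cases hyT : y ∈ T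
      · exact Finset.mem_insert_of_mem hyT
      rcases Finset.mem_insert.1 hx with rfl | hx
      · have := hmax y (Finset.mem_sdiff.2 ⟨hy, hyT⟩)
        rw [hinj y x (hS0 _ hy) (hS1 _ hy) (hS0 _ haS) (hS1 _ haS) (le_antisymm this hxy)]
        exact Finset.mem_insert_self _ _
      · exact absurd (hup x hx y hy hxy) hyT
    have hcard : (S \ insert a T).card = k := by
      have h2 := Finset.card_sdiff_add_card_eq_card hTS
      have h3 := Finset.card_sdiff_add_card_eq_card hsub
      rw [Finset.card_insert_of_notMem haT] at h3
      omega
    have hT : ∀ l ∈ T, ∀ b ∈ S, b * l = a → b ∈ T := by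
      intro l hl b hb hbl
      have hal : rk a < rk l := by
        by_contra! h
        exact haT (hup l hl a haS h)
      have hab := hrk a b l (hS0 _ haS) (hS1 _ haS) (hS0 _ hb) (hS1 _ hb)
        (hS0 _ (hTS hl)) (hS1 _ (hTS hl)) hbl hal
      by_contra hbT
      exact absurd (hmax b (Finset.mem_sdiff.2 ⟨hb, hbT⟩)) (not_le.2 hab)
    set K := derivedSeriesOfIdeal ℂ g (2 ^ k - 1) H with hKdef
    have hKH : K ≤ H := derivedSeriesOfIdeal_le_self H _
    have hKh : HomogIdeal V K := hH.derived hV _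
    have hK := ih (insert a T) hsub hup' hcard H hH h1
    have hKK : (⁅K, K⁆ : LieIdeal ℂ g) ≤ H := (LieSubmodule.lie_le_left K K).trans hKH
    have hexp : 2 ^ (k + 1) - 1 = (2 ^ k - 1) + (1 + (2 ^ k - 1)) := by
      have := Nat.one_le_two_pow (n := k)
      rw [pow_succ]; omega
    rw [hexp, derivedSeriesOfIdeal_add, derivedSeriesOfIdeal_add] at hx
    have hx' := ih (insert a T) hsub hup' hcard ⁅K, K⁆ (hKh.lie hV)
      (fun x hx h => h1 x (hKK hx) h) x hx
    have hle : genSub V J ⁅K, K⁆ (insert a T) ≤ genSub V J H T := by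
      unfold genSub
      rw [LieSubalgebra.lieSpan_le]
      rintro y (⟨b, hb, hyK, hyb⟩ | hy)
      · rcases Finset.mem_insert.1 hb with rfl | hb
        · exact bracket_inf_weight_le hind hV hS hJ hH h1 (hS0 _ haS) hT haT hKH hK hyK hyb
        · exact LieSubalgebra.subset_lieSpan (Or.inl ⟨b, hb, hKK hyK, hyb⟩)
      · exact LieSubalgebra.subset_lieSpan (Or.inr hy)
    exact hle hx'

/-- Kreknin's theorem relative to an ideal `J`, for gradings by `ℂˣ` with finitely many weights. -/
lemma kreknin {V : ℂ → Submodule ℂ g} (hind : iSupIndep V)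
    (hV : ∀ a b x y, x ∈ V a → y ∈ V b → ⁅x, y⁆ ∈ V (a * b))
    {S : Finset ℂ} (hS : ∀ μ, μ ∉ S → μ ≠ 1 → V μ = ⊥)
    (hS0 : ∀ μ ∈ S, μ ≠ 0) (hS1 : ∀ μ ∈ S, μ ≠ 1) {n : ℕ} (hn : S.card ≤ n)
    {J H : LieIdeal ℂ g} (hJ : HomogIdeal V J) (hH : HomogIdeal V H)
    (h1 : ∀ x ∈ H, x ∈ V 1 → x ∈ J) :
    derivedSeriesOfIdeal ℂ g (2 ^ n) H ≤ J := by
  obtain ⟨rk, hinj, hrk⟩ := exists_weight_order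
  intro x hx
  refine genSub_empty V J H (kreknin_aux hind hV hS hS0 hS1 hinj hrk hJ S.card ∅ (by simp)
    (by simp) (by simp) H hH h1 x ?_)
  exact derivedSeriesOfIdeal_antitone H
    ((Nat.sub_le _ _).trans (Nat.pow_le_pow_right (by norm_num) hn)) hx

/-! ### Counting drops of the weight-one component -/

/-- A solvable ideal equal to its derived ideal vanishes. -/
lemma eq_bot_of_le_derived {I : LieIdeal ℂ g} {N : ℕ} (hN : derivedSeriesOfIdeal ℂ g N I = ⊥)
    (h : I ≤ derivedSeriesOfIdeal ℂ g 1 I) : I = ⊥ := by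
  have : ∀ k, I ≤ derivedSeriesOfIdeal ℂ g k I := by
    intro k
    induction k with
    | zero => exact le_rfl
    | succ k ih =>
      rw [derivedSeriesOfIdeal_add]
      exact ih.trans (derivedSeriesOfIdeal_mono h k)
  exact le_bot_iff.1 (hN ▸ this N)

lemma derived_bound [FiniteDimensional ℂ g] {V : ℂ → Submodule ℂ g} (hind : iSupIndep V)
    (hV : ∀ a b x y, x ∈ V a → y ∈ V b → ⁅x, y⁆ ∈ V (a * b))
    {S : Finset ℂ} (hS : ∀ μ, μ ∉ S → μ ≠ 1 → V μ = ⊥)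
    (hS0 : ∀ μ ∈ S, μ ≠ 0) (hS1 : ∀ μ ∈ S, μ ≠ 1) {n : ℕ} (hn : S.card ≤ n) (j : ℕ) :
    ∀ (I : LieIdeal ℂ g), HomogIdeal V I → (∃ N, derivedSeriesOfIdeal ℂ g N I = ⊥) →
    Module.finrank ℂ ↥(I.toSubmodule ⊓ V 1) ≤ j →
    derivedSeriesOfIdeal ℂ g ((j + 1) * 2 ^ n + j) I = ⊥ := by
  induction j with
  | zero =>
    intro I hI _ hj
    have h0 : I.toSubmodule ⊓ V 1 = ⊥ := Submodule.finrank_eq_zero.1 (Nat.le_zero.1 hj)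
    have hb : HomogIdeal V (⊥ : LieIdeal ℂ g) := by simp [HomogIdeal]
    have := kreknin hind hV hS hS0 hS1 hn hb hI (fun x hx hx1 => by
      have : x ∈ I.toSubmodule ⊓ V 1 := ⟨hx, hx1⟩
      rw [h0] at this
      simpa using this)
    simpa using this
  | succ j ih =>
    rintro I hI ⟨N, hN⟩ hj
    set J := derivedSeriesOfIdeal ℂ g (2 ^ n + 1) I with hJdef
    have hJ : HomogIdeal V J := hI.derived hV _
    have hJI : J ≤ I := derivedSeriesOfIdeal_le_self I _
    by_cases h1 : ∀ x ∈ I, x ∈ V 1 → x ∈ J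
    · have hk := kreknin hind hV hS hS0 hS1 hn hJ hI h1
      rw [hJdef, add_comm, derivedSeriesOfIdeal_add] at hk
      have hz := eq_bot_of_le_derived (N := N) (by
        rw [← derivedSeriesOfIdeal_add]
        exact le_bot_iff.1 (hN ▸ derivedSeriesOfIdeal_antitone I (Nat.le_add_right _ _))) hk
      rw [← le_bot_iff, ← hz]
      exact derivedSeriesOfIdeal_antitone I (by nlinarith [Nat.one_le_two_pow (n := n)])
    · push Not at h1
      obtain ⟨x, hxI, hx1, hxJ⟩ := h1
      have hlt : J.toSubmodule ⊓ V 1 < I.toSubmodule ⊓ V 1 := by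
        refine lt_of_le_of_ne (inf_le_inf_right _ hJI) fun h => hxJ ?_
        exact (h.ge ⟨hxI, hx1⟩ : x ∈ J.toSubmodule ⊓ V 1).1
      have hfr := Submodule.finrank_lt_finrank_of_lt hlt
      have := ih J hJ ⟨N, le_bot_iff.1 (hN ▸ derivedSeriesOfIdeal_mono hJI N)⟩ (by omega)
      rw [hJdef, ← derivedSeriesOfIdeal_add] at this
      rw [← this]
      congr 1
      ring

end Graded

/-! ### The radical and the eigenspace grading -/

lemma map_mem_radical {g : Type*} [LieRing g] [LieAlgebra ℂ g] [FiniteDimensional ℂ g]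
    (α : g ≃ₗ⁅ℂ⁆ g) {x : g} (hx : x ∈ radical ℂ g) : α x ∈ radical ℂ g := by
  let I : LieIdeal ℂ g := LieIdeal.comap α.symm.toLieHom (radical ℂ g)
  have hmem : ∀ y, y ∈ I ↔ α.symm y ∈ radical ℂ g := fun y => LieIdeal.mem_comap
  let f : I →ₗ⁅ℂ⁆ radical ℂ g :=
    { toFun := fun y => ⟨α.symm y, (hmem y).1 y.2⟩
      map_add' := fun y z => by ext; simp
      map_smul' := fun c y => by ext; simp
      map_lie' := fun {y z} => by
        ext
        exact LieEquiv.map_lie α.symm (y : g) (z : g) }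
  have hf : Function.Injective f := by
    intro y z h
    have := congrArg Subtype.val h
    exact Subtype.ext (α.symm.injective this)
  have hI : IsSolvable I := hf.lieAlgebra_isSolvable
  have hle := (LieIdeal.solvable_iff_le_radical ℂ g I).1 hI
  exact hle ((hmem _).2 (by simpa using hx))


/-- Let `g` be a finite-dimensional Lie algebra over `ℂ` with solvable radical `r`, and let
`α` be a semisimple automorphism of `g` having exactly `n` distinct eigenvalues and whose
fixed-point subalgebra has dimension `m`. Then the derived length of `r` is at most
`(m + 1) * 2 ^ n + m`. -/
theorem derivedLength_radical_le_bound
    (g : Type*) [LieRing g] [LieAlgebra ℂ g] [FiniteDimensional ℂ g]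
    (α : g ≃ₗ⁅ℂ⁆ g) (n m : ℕ)
    (hss : Module.End.IsSemisimple (α.toLinearEquiv : g →ₗ[ℂ] g))
    (heig : {μ : ℂ | Module.End.HasEigenvalue (α.toLinearEquiv : g →ₗ[ℂ] g) μ}.ncard = n)
    (hfix : Module.finrank ℂ ↥(Module.End.eigenspace (α.toLinearEquiv : g →ₗ[ℂ] g) 1) = m) :
    LieAlgebra.derivedSeries ℂ ↥(LieAlgebra.radical ℂ g) ((m + 1) * 2 ^ n + m) = ⊥ := by
  set f : Module.End ℂ g := (α.toLinearEquiv : g →ₗ[ℂ] g) with hf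
  set V : ℂ → Submodule ℂ g := fun μ => f.eigenspace μ with hVdef
  have hVmem : ∀ μ x, x ∈ V μ ↔ α x = μ • x := fun μ x => mem_eigenspace_iff
  have hV : ∀ a b x y, x ∈ V a → y ∈ V b → ⁅x, y⁆ ∈ V (a * b) := by
    intro a b x y hx hy
    rw [hVmem] at *
    rw [LieEquiv.map_lie, hx, hy, smul_lie, lie_smul, smul_smul]
  have hfin : {μ : ℂ | f.HasEigenvalue μ}.Finite := f.finite_hasEigenvalue
  have hbot : ∀ μ, ¬ f.HasEigenvalue μ → V μ = ⊥ := fun μ h => by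
    simpa [HasEigenvalue, HasUnifEigenvalue] using h
  have hhom : HomogIdeal V (radical ℂ g) := by
    have hinv : ∀ x ∈ (radical ℂ g).toSubmodule, f x ∈ (radical ℂ g).toSubmodule :=
      fun x hx => map_mem_radical α hx
    have := Submodule.inf_iSup_genEigenspace hinv 1
    have htop : ⨆ μ, f.genEigenspace μ 1 = ⊤ := hss.iSup_eigenspace_eq_top
    rw [htop, inf_top_eq] at this
    exact this.le
  have hsol : ∃ N, derivedSeriesOfIdeal ℂ g N (radical ℂ g) = ⊥ := by
    obtain ⟨N, hN⟩ := IsSolvable.solvable ℂ (radical ℂ g)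
    exact ⟨N, (LieIdeal.derivedSeries_eq_bot_iff _ N).1 hN⟩
  rw [LieIdeal.derivedSeries_eq_bot_iff]
  refine derived_bound (V := V) (S := hfin.toFinset.erase 1) f.eigenspaces_iSupIndep hV ?_ ?_ ?_
    ?_ m _ hhom hsol ?_
  · intro μ hμ h1
    refine hbot μ fun h => hμ ?_
    simp [h1, h]
  · rintro μ hμ rfl
    have h : f.HasEigenvalue 0 := by simpa using hμ
    obtain ⟨v, hv⟩ := h.exists_hasEigenvector
    have h2 := (hVmem 0 v).1 hv.1
    rw [zero_smul] at h2
    exact hv.2 (α.injective (h2.trans (map_zero α).symm))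
  · intro μ hμ
    exact Finset.ne_of_mem_erase hμ
  · refine (Finset.card_erase_le).trans ?_
    rw [← heig, Set.ncard_eq_toFinset_card _ hfin]
  · rw [← hfix]
    exact Submodule.finrank_mono inf_le_right
end

section
/- Let g be a finite-dimensional Lie algebra over ℂ with solvable radical r, and let α be a semisimple automorphism of g having exactly n distinct eigenvalues and whose fixed-point subalgebra has dimension m. Then dim(g/r) ≤ 16·(m·n)^3 + 4·(m·n)^2 + 224·(m·n). -/
/-!
Passing to `s = g ⧸ r` replaces `α` by a diagonalizable automorphism `φ` with eigenvalues among those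
of `α`, and fixed points of `φ` lift to fixed points of `α` (`AnnBy.exists_lift`). So let `s` be
semisimple, and let `φ` have at most `n` eigenvalues and a fixed subalgebra of dimension at most `m`.

*A Cartan subalgebra.* Kreknin's argument (`eq_zero_of_perfect`) shows that a Lie algebra on which
a diagonalizable automorphism has only ad-nilpotent fixed points is solvable
(`isSolvable_of_fixed_nilpotent`). Applied to the smallest Engel subalgebra `H` of a fixed point `x`,
this makes `H` solvable, and then abelian, since the Killing form of `s` is nondegenerate on `H`,
while `⁅H, H⁆` is orthogonal to `H` by the theorem of Lie (`exists_cartan`). Thus `H` is a `φ`-stable Cartan subalgebra and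
no root vanishes at `x`.

*The rank.* Since `x` is fixed, `φ` preserves the positive system defined by the values of the roots
at `x`, so it permutes the simple roots. A permutation of a basis has at most `m` cycles, as each
cycle contributes a fixed vector, and each cycle has length at most `n`, as the characteristic
polynomial of a cycle of length `k` has `k` distinct roots. So `r = dim H ≤ m n`
(`card_le_of_perm`).

*The dimension.* A root system of rank `r` has at most `2 (r ^ 3 + r)` roots (`card_roots_le`), so
`dim s ≤ 2 r ^ 3 + 3 r` with `r ≤ m n`, which is stronger than the required bound. No classification
of root systems is used.
-/

/-! ### Diagonalizable endomorphisms with prescribed spectrum -/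

section
open Module Polynomial

/-- `A` is annihilated by `∏ (X - μ)`, `μ ∈ Λ`: it is diagonalizable with all its eigenvalues in
the finite set `Λ`. This form passes to invariant subspaces and to quotients. Elements of `Λ` need
not be eigenvalues. -/
def AnnBy {V : Type*} [AddCommGroup V] [Module ℂ V] (Λ : Finset ℂ) (A : End ℂ V) : Prop :=
  aeval A (∏ μ ∈ Λ, (X - C μ)) = 0

section AnnBy
variable {V W : Type*} [AddCommGroup V] [Module ℂ V] [AddCommGroup W] [Module ℂ W]
  {Λ : Finset ℂ}

theorem aeval_intertwine {A : End ℂ V} {B : End ℂ W} {f : V →ₗ[ℂ] W}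
    (h : ∀ v, f (A v) = B (f v)) (p : ℂ[X]) (v : V) : f (aeval A p v) = aeval B p (f v) := by
  induction p using Polynomial.induction_on' with
  | add p q hp hq => simp [hp, hq]
  | monomial n a =>
    have hn : ∀ v, f ((A ^ n) v) = (B ^ n) (f v) := by
      induction n with
      | zero => simp
      | succ n ih => intro v; simp [pow_succ, ih, h]
    simp [aeval_monomial, Module.algebraMap_end_apply, hn]

theorem AnnBy.of_surjective {A : End ℂ V} {B : End ℂ W} (hA : AnnBy Λ A) {f : V →ₗ[ℂ] W}
    (h : ∀ v, f (A v) = B (f v)) (hf : Function.Surjective f) : AnnBy Λ B := by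
  ext w
  obtain ⟨v, rfl⟩ := hf w
  rw [← aeval_intertwine h, hA]; simp

theorem AnnBy.of_injective {A : End ℂ V} {B : End ℂ W} (hB : AnnBy Λ B) {f : V →ₗ[ℂ] W}
    (h : ∀ v, f (A v) = B (f v)) (hf : Function.Injective f) : AnnBy Λ A := by
  ext v
  apply hf
  rw [aeval_intertwine h, hB]; simp

theorem AnnBy.isSemisimple {A : End ℂ V} (hA : AnnBy Λ A) : A.IsSemisimple := by
  refine End.isSemisimple_of_squarefree_aeval_eq_zero ?_ hA
  refine (separable_prod_X_sub_C_iff' (f := fun x => x) (s := Λ)).2 ?_ |>.squarefree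
  intro x _ y _ h; exact h

theorem AnnBy.iSup_eigenspace {A : End ℂ V} [FiniteDimensional ℂ V] (hA : AnnBy Λ A) :
    ⨆ μ, A.eigenspace μ = ⊤ := by
  exact End.IsSemisimple.iSup_eigenspace_eq_top hA.isSemisimple

theorem AnnBy.mem_of_apply_eq {A : End ℂ V} (hA : AnnBy Λ A) {μ : ℂ} {v : V} (hv : v ≠ 0)
    (h : A v = μ • v) : μ ∈ Λ := by
  have h1 := End.aeval_apply_of_hasEigenvector (p := ∏ μ ∈ Λ, (X - C μ))
    (⟨End.mem_eigenspace_iff.2 h, hv⟩ : A.HasEigenvector μ v)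
  have hA' : aeval A (∏ μ ∈ Λ, (X - C μ)) = 0 := hA
  rw [hA'] at h1
  have h2 := h1.symm
  simp only [LinearMap.zero_apply, smul_eq_zero, hv, or_false, eval_prod, Finset.prod_eq_zero_iff,
    eval_sub, eval_X, eval_C] at h2
  obtain ⟨a, ha, h⟩ := h2
  rw [sub_eq_zero.1 h]; exact ha

/-- A semisimple endomorphism is annihilated by the product over any finite set containing its
eigenvalues. -/
theorem annBy_of_isSemisimple [FiniteDimensional ℂ V] {A : End ℂ V} (hA : A.IsSemisimple)
    (h : ∀ μ, A.HasEigenvalue μ → μ ∈ Λ) : AnnBy Λ A := by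
  have key : ∀ v ∈ ⨆ μ, A.eigenspace μ, aeval A (∏ μ ∈ Λ, (X - C μ)) v = 0 := by
    intro v hv
    have : ⨆ μ, A.eigenspace μ ≤ LinearMap.ker (aeval A (∏ μ ∈ Λ, (X - C μ))) := by
      refine iSup_le fun μ w hw => ?_
      by_cases h0 : w = 0
      · simp [h0]
      have := End.aeval_apply_of_hasEigenvector (p := ∏ μ ∈ Λ, (X - C μ))
        (⟨hw, h0⟩ : A.HasEigenvector μ w)
      rw [LinearMap.mem_ker, this, eval_prod, Finset.prod_eq_zero (h μ _)]
      · simp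
      · simp
      · exact End.hasEigenvalue_of_hasEigenvector ⟨hw, h0⟩
    exact this hv
  rw [End.IsSemisimple.iSup_eigenspace_eq_top hA] at key
  exact LinearMap.ext fun v => key v trivial

/-- Eigenvectors lift along surjections that intertwine two endomorphisms. -/
theorem AnnBy.exists_lift [FiniteDimensional ℂ V] {A : End ℂ V} {B : End ℂ W} (hA : AnnBy Λ A)
    {f : V →ₗ[ℂ] W} (h : ∀ v, f (A v) = B (f v)) (hf : Function.Surjective f) {μ : ℂ} {w : W}
    (hw : B w = μ • w) : ∃ v, A v = μ • v ∧ f v = w := by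
  classical
  -- project onto the `μ`-eigenspace with the polynomial `∏ (X - ν)`, `ν ≠ μ`
  by_cases h0 : w = 0
  · exact ⟨0, by simp, by simp [h0]⟩
  have hμ := (hA.of_surjective h hf).mem_of_apply_eq h0 hw
  set q : ℂ[X] := ∏ ν ∈ Λ.erase μ, (X - C ν) with hq
  have hq0 : q.eval μ ≠ 0 := by
    rw [hq, eval_prod, Finset.prod_ne_zero_iff]
    intro ν hν
    simpa [sub_eq_zero] using (Finset.ne_of_mem_erase hν).symm
  obtain ⟨v, rfl⟩ := hf w
  refine ⟨(q.eval μ)⁻¹ • aeval A q v, ?_, ?_⟩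
  · have h1 : aeval A (∏ μ ∈ Λ, (X - C μ)) v = 0 := by
      have hA' : aeval A (∏ μ ∈ Λ, (X - C μ)) = 0 := hA
      rw [hA']; rfl
    rw [← Finset.mul_prod_erase _ _ hμ, map_mul] at h1
    simp only [map_sub, aeval_X, aeval_C, End.mul_apply, LinearMap.sub_apply,
      Module.algebraMap_end_apply, sub_eq_zero] at h1
    rw [map_smul, h1, smul_comm]
  · have := End.aeval_apply_of_hasEigenvector (p := q)
      (⟨End.mem_eigenspace_iff.2 hw, h0⟩ : B.HasEigenvector μ (f v))
    rw [map_smul, aeval_intertwine h, this, smul_smul, inv_mul_cancel₀ hq0, one_smul]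

end AnnBy

end

/-! ### A circular ordering of finite subsets of the unit group -/

section
/-- The combinatorial input to `eq_zero_of_perfect`. Away from `1`, a product of two elements of
`Λ` is either larger than both factors or smaller than both. The function `K` is the fractional part
of a generic homomorphism `χ : ℂˣ → ℝ ⧸ ℤ`, `χ a = arg a / (2 π) + ε log ‖a‖`: if `x, y ∈ (0, 1)` then
`fract (x + y)` is either `x + y` or `x + y - 1`. -/
theorem exists_ordering (Λ : Finset ℂ) (h0 : (0 : ℂ) ∉ Λ) :
    ∃ K : ℂ → ℝ, ∀ a ∈ Λ, ∀ b ∈ Λ, a ≠ 1 → b ≠ 1 → a * b ∈ Λ → a * b ≠ 1 →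
      (K a < K (a * b) ∧ K b < K (a * b)) ∨ (K (a * b) < K a ∧ K (a * b) < K b) := by
  have hπ := Real.pi_pos
  set l : ℂ → ℝ := fun a => Real.log ‖a‖ with hl
  set θ : ℂ → ℝ := fun a => a.arg / (2 * Real.pi) with hθ
  obtain ⟨ε, hε⟩ : ∃ ε : ℝ, ∀ a ∈ Λ, a ≠ 1 → ∀ k : ℤ, θ a + ε * l a ≠ k := by
    have hc : (⋃ a ∈ Λ, ⋃ k : ℤ, ({((k : ℝ) - θ a) / l a} : Set ℝ)).Countable :=
      Set.Countable.biUnion Λ.countable_toSet fun a _ =>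
        Set.countable_iUnion fun k => Set.countable_singleton _
    obtain ⟨ε, hε⟩ : ∃ ε, ε ∉ ⋃ a ∈ Λ, ⋃ k : ℤ, ({((k : ℝ) - θ a) / l a} : Set ℝ) := by
      by_contra! h
      exact Set.not_countable_univ (α := ℝ) (hc.mono fun x _ => h x)
    refine ⟨ε, fun a ha ha1 k hk => ?_⟩
    have ha0 : a ≠ 0 := fun h => h0 (h ▸ ha)
    by_cases hla : l a = 0
    · -- on the unit circle `θ a` is not an integer unless `a = 1`
      rw [hla, mul_zero, add_zero, hθ] at hk
      have h1 := Complex.arg_le_pi a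
      have h2 := Complex.neg_pi_lt_arg a
      have hk' : a.arg = k * (2 * Real.pi) := by
        rw [← hk]; field_simp
      have : k = 0 := by
        have h3 : (k : ℝ) < 1 := by nlinarith
        have h4 : (-1 : ℝ) < k := by nlinarith
        have h3' : k < 1 := by exact_mod_cast h3
        have h4' : -1 < k := by exact_mod_cast h4
        omega
      have harg : a.arg = 0 := by rw [hk', this]; simp
      have hn : ‖a‖ = 1 := by
        rcases Real.log_eq_zero.1 hla with h | h | h
        · exact absurd (norm_eq_zero.1 h) ha0
        · exact h
        · linarith [norm_nonneg a]
      apply ha1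
      rw [← Complex.norm_mul_exp_arg_mul_I a, hn, harg]; simp
    · apply hε
      simp only [Set.mem_iUnion, Set.mem_singleton_iff]
      refine ⟨a, ha, k, ?_⟩
      rw [← hk]; field_simp; ring
  -- hence `χ a ≠ 0` for `1 ≠ a ∈ Λ`, and fractional parts of values of `χ` lie in `(0, 1)`
  refine ⟨fun a => Int.fract (θ a + ε * l a), fun a ha b hb ha1 hb1 hab hab1 => ?_⟩
  have ha0 : a ≠ 0 := fun h => h0 (h ▸ ha)
  have hb0 : b ≠ 0 := fun h => h0 (h ▸ hb)
  have pos : ∀ a ∈ Λ, a ≠ 1 → 0 < Int.fract (θ a + ε * l a) := fun a ha ha1 =>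
    Int.fract_pos.2 fun h => hε a ha ha1 _ h
  obtain ⟨k, hk⟩ : ∃ k : ℤ, θ (a * b) + ε * l (a * b)
      = (θ a + ε * l a) + (θ b + ε * l b) + k := by
    obtain ⟨k, hk⟩ := Real.Angle.angle_eq_iff_two_pi_dvd_sub.1
      ((Complex.arg_mul_coe_angle ha0 hb0).trans (Real.Angle.coe_add _ _).symm)
    refine ⟨k, ?_⟩
    have h1 : l (a * b) = l a + l b := by
      simp only [hl, norm_mul]
      exact Real.log_mul (norm_ne_zero_iff.2 ha0) (norm_ne_zero_iff.2 hb0)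
    have h2 : θ (a * b) = θ a + θ b + k := by
      simp only [hθ]
      field_simp
      linarith
    rw [h1, h2]; ring
  have pa := pos a ha ha1
  have pb := pos b hb hb1
  have pab := pos _ hab hab1
  have la := Int.fract_lt_one (θ a + ε * l a)
  have lb := Int.fract_lt_one (θ b + ε * l b)
  have lab := Int.fract_lt_one (θ (a * b) + ε * l (a * b))
  have e : Int.fract (θ (a * b) + ε * l (a * b)) = Int.fract (θ a + ε * l a)
      + Int.fract (θ b + ε * l b) + ((⌊θ a + ε * l a⌋ + ⌊θ b + ε * l b⌋ + k
        - ⌊θ (a * b) + ε * l (a * b)⌋ : ℤ) : ℝ) := by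
    simp only [Int.fract, hk]; push_cast; ring
  generalize (⌊θ a + ε * l a⌋ + ⌊θ b + ε * l b⌋ + k - ⌊θ (a * b) + ε * l (a * b)⌋ : ℤ) = z at e
  simp only
  generalize Int.fract (θ (a * b) + ε * l (a * b)) = x at *
  generalize Int.fract (θ a + ε * l a) = y at *
  generalize Int.fract (θ b + ε * l b) = w at *
  have hz : 0 ≤ z ∨ z ≤ -1 := by omega
  rcases hz with hz | hz
  · have : (0 : ℝ) ≤ z := by exact_mod_cast hz
    left; constructor <;> linarith
  · have : (z : ℝ) ≤ -1 := by exact_mod_cast hz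
    right; constructor <;> linarith

end

/-! ### Kreknin's theorem for perfect Lie algebras -/

section
open Module

theorem lie_mem_eigenspace {L : Type*} [LieRing L] [LieAlgebra ℂ L] (φ : L →ₗ⁅ℂ⁆ L) {a b : ℂ}
    {x y : L} (hx : φ x = a • x) (hy : φ y = b • y) : φ ⁅x, y⁆ = (a * b) • ⁅x, y⁆ := by
  rw [LieHom.map_lie, hx, hy, smul_lie, lie_smul, smul_smul]

/-- A variant of Kreknin's theorem: a perfect Lie algebra with a diagonalizable automorphism of
finite spectrum without nonzero fixed points is zero.

Order the eigenvalues by the function `K` of `exists_ordering`, and let `G T` be the subalgebra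
generated by the eigenspaces for the eigenvalues in `T`. If `T` is upward closed and `G T = L`, then
the eigenvalues `lam` of minimal `K` can be dropped from `T`: a bracket of the `τ`-eigenspace,
`τ ∈ T`, with the `ν`-eigenspace, `τ * ν = lam`, can only be nonzero if `K τ` and `K ν` both exceed
`K lam`, so it lies in the smaller subalgebra; and by perfectness such brackets span the
`lam`-eigenspace. Descending to `T = ∅` gives `L = 0`. -/
theorem eq_zero_of_perfect {L : Type*} [LieRing L] [LieAlgebra ℂ L] (φ : L →ₗ⁅ℂ⁆ L)
    (Λ : Finset ℂ) (h0 : (0 : ℂ) ∉ Λ)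
    (hss : ⨆ μ, End.eigenspace (φ : L →ₗ[ℂ] L) μ = ⊤)
    (hΛ : ∀ μ : ℂ, ∀ x : L, x ≠ 0 → φ x = μ • x → μ ∈ Λ)
    (hfix : ∀ x, φ x = x → x = 0)
    (hperf : ∀ Y : Submodule ℂ L, (∀ a b : L, ⁅a, b⁆ ∈ Y) → Y = ⊤) (x : L) : x = 0 := by
  classical
  obtain ⟨K, hK⟩ := exists_ordering Λ h0
  set V : ℂ → Submodule ℂ L := fun μ => End.eigenspace (φ : L →ₗ[ℂ] L) μ with hV
  have memV : ∀ {μ : ℂ} {x : L}, x ∈ V μ ↔ φ x = μ • x := fun {μ x} => End.mem_eigenspace_iff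
  set Λ' := Λ.erase 1 with hΛ'
  have hΛ1 : ∀ {μ : ℂ} {x : L}, x ∈ V μ → x ≠ 0 → μ ∈ Λ' := by
    intro μ x hx hx0
    refine Finset.mem_erase.2 ⟨?_, hΛ μ x hx0 (memV.1 hx)⟩
    rintro rfl
    exact hx0 (hfix x (by simpa using memV.1 hx))
  let G : Finset ℂ → LieSubalgebra ℂ L := fun T =>
    LieSubalgebra.lieSpan ℂ L {x | ∃ μ ∈ T, x ∈ V μ}
  have main : ∀ T : Finset ℂ, T ⊆ Λ' → (∀ μ ∈ T, ∀ ν ∈ Λ', K μ ≤ K ν → ν ∈ T) → G T = ⊤ →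
      ∀ x : L, x = 0 := by
    intro T
    induction T using Finset.strongInduction with
    | H T ih =>
    intro hT hup hG
    rcases T.eq_empty_or_nonempty with rfl | hne
    · intro x
      have hx : x ∈ G ∅ := hG ▸ LieSubalgebra.mem_top x
      simpa [G, LieSubalgebra.span_empty] using hx
    obtain ⟨μ₀, hμ₀, hmin⟩ := T.exists_min_image K hne
    set T' := T.filter (fun μ => K μ₀ < K μ) with hT'
    have hss' : T' ⊂ T := Finset.filter_ssubset.2 ⟨μ₀, hμ₀, lt_irrefl _⟩
    refine ih T' hss' (hss'.1.trans hT) ?_ ?_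
    · intro μ hμ ν hν hμν
      have := Finset.mem_filter.1 hμ
      exact Finset.mem_filter.2 ⟨hup μ this.1 ν hν hμν, this.2.trans_le hμν⟩
    rw [← top_le_iff, ← hG]
    refine LieSubalgebra.lieSpan_le.2 ?_
    rintro x ⟨lam, hlam, hx⟩
    by_cases hk : K μ₀ < K lam
    · exact LieSubalgebra.subset_lieSpan ⟨lam, Finset.mem_filter.2 ⟨hlam, hk⟩, hx⟩
    have hk' : ∀ τ ∈ T, K lam ≤ K τ := fun τ hτ => (not_lt.1 hk).trans (hmin τ hτ)
    have hT'' : ∀ τ ∈ T, K lam < K τ → τ ∈ T' := fun τ hτ h =>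
      Finset.mem_filter.2 ⟨hτ, (hmin lam hlam).trans_lt h⟩
    set N := G T' with hN
    set R : Submodule ℂ L := ⨆ ν, ⨆ (_ : ν ≠ lam), V ν with hR
    set Y : Submodule ℂ L := (N.toSubmodule ⊓ V lam) ⊔ R with hY
    have hYne : ∀ ν, ν ≠ lam → V ν ≤ Y := fun ν hν =>
      (le_iSup₂_of_le (f := fun ν (_ : ν ≠ lam) => V ν) ν hν le_rfl).trans le_sup_right
    -- the elements `a` with `⁅a, L⁆ ⊆ Y` form a subalgebra, so it suffices to test generators
    let S : LieSubalgebra ℂ L :=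
      { carrier := {a | ∀ y : L, ⁅a, y⁆ ∈ Y}
        add_mem' := fun {a b} ha hb y => by rw [add_lie]; exact Y.add_mem (ha y) (hb y)
        zero_mem' := fun y => by simp
        smul_mem' := fun c a ha y => by rw [smul_lie]; exact Y.smul_mem c (ha y)
        lie_mem' := fun {a b} ha hb y => by
          rw [lie_lie]; exact Y.sub_mem (ha _) (hb _) }
    have hS : G T ≤ S := by
      refine LieSubalgebra.lieSpan_le.2 ?_
      rintro a ⟨τ, hτ, ha⟩ y
      have hle : (⊤ : Submodule ℂ L) ≤ Y.comap (LieAlgebra.ad ℂ L a : L →ₗ[ℂ] L) := by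
        rw [← hss]
        refine iSup_le fun ν y hy => ?_
        change ⁅a, y⁆ ∈ Y
        have hprod : ⁅a, y⁆ ∈ V (τ * ν) := memV.2 (lie_mem_eigenspace φ (memV.1 ha) (memV.1 hy))
        by_cases hν : τ * ν = lam
        · by_cases hy0 : y = 0
          · simp [hy0]
          have hτΛ := Finset.mem_erase.1 (hT hτ)
          have hνΛ' := hΛ1 hy hy0
          have hνΛ := Finset.mem_erase.1 hνΛ'
          have hlΛ := Finset.mem_erase.1 (hT hlam)
          rcases hK τ hτΛ.2 ν hνΛ.2 hτΛ.1 hνΛ.1 (hν ▸ hlΛ.2) (hν ▸ hlΛ.1) with h | h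
          · rw [hν] at h
            exact absurd (hk' τ hτ) (not_le.2 h.1)
          · rw [hν] at h
            refine Submodule.mem_sup_left ⟨?_, hν ▸ hprod⟩
            exact N.lie_mem (LieSubalgebra.subset_lieSpan ⟨τ, hT'' τ hτ h.1, ha⟩)
              (LieSubalgebra.subset_lieSpan
                ⟨ν, hT'' ν (hup lam hlam ν hνΛ' h.2.le) h.2, hy⟩)
        · exact hYne _ hν hprod
      exact hle trivial
    have hYtop : Y = ⊤ := hperf Y fun a b => (hS (hG ▸ LieSubalgebra.mem_top a) :) b
    obtain ⟨u, hu, w, hw, huw⟩ := Submodule.mem_sup.1 (hYtop ▸ Submodule.mem_top : x ∈ Y)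
    have hind := End.eigenspaces_iSupIndep (φ : L →ₗ[ℂ] L) lam
    have hw' : w ∈ V lam := by
      rw [← eq_sub_iff_add_eq'] at huw
      rw [huw]; exact (V lam).sub_mem hx hu.2
    have : w = 0 := by simpa using hind.le_bot ⟨hw', hw⟩
    rw [← huw, this, add_zero]; exact hu.1
  refine main Λ' le_rfl (fun _ _ ν hν _ => hν) ?_ x
  rw [← top_le_iff]
  intro y _
  have : (⊤ : Submodule ℂ L) ≤ (G Λ').toSubmodule := by
    rw [← hss]
    refine iSup_le fun ν y hy => ?_
    by_cases hy0 : y = 0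
    · simp [hy0]
    exact LieSubalgebra.subset_lieSpan ⟨ν, hΛ1 hy hy0, hy⟩
  exact this trivial

end

/-! ### The quotient by the radical -/

section
open Module LieAlgebra

section Radical
variable {L M : Type*} [LieRing L] [LieAlgebra ℂ L] [LieRing M] [LieAlgebra ℂ M]

/-- The quotient map by an ideal, as a homomorphism of Lie algebras. -/
def quotHom (I : LieIdeal ℂ L) : L →ₗ⁅ℂ⁆ L ⧸ I :=
  { (LieSubmodule.Quotient.mk' I : L →ₗ[ℂ] L ⧸ I) with
    map_lie' := fun {x y} => LieSubmodule.Quotient.mk_bracket I x y }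

theorem quotHom_surjective (I : LieIdeal ℂ L) : Function.Surjective (quotHom I) :=
  LieSubmodule.Quotient.surjective_mk' I

theorem quotHom_eq_zero {I : LieIdeal ℂ L} {x : L} : quotHom I x = 0 ↔ x ∈ I :=
  LieSubmodule.Quotient.mk_eq_zero I

/-- An extension of a solvable Lie algebra by a solvable one is solvable. -/
theorem isSolvable_of_ker (f : L →ₗ⁅ℂ⁆ M) [IsSolvable M] (hk : IsSolvable f.ker) :
    IsSolvable L := by
  obtain ⟨k, hk'⟩ := IsSolvable.solvable (R := ℂ) (L := M)
  obtain ⟨l, hl⟩ := IsSolvable.solvable (R := ℂ) (L := f.ker)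
  have h1 : derivedSeries ℂ L k ≤ f.ker := by
    have := LieIdeal.derivedSeries_map_le (f := f) k
    rw [hk', le_bot_iff, LieIdeal.map_eq_bot_iff] at this
    exact this
  refine IsSolvable.mk (R := ℂ) (k := l + k) ?_
  rw [derivedSeries_def, derivedSeriesOfIdeal_add, ← le_bot_iff]
  refine (derivedSeriesOfIdeal_mono h1 l).trans ?_
  rw [le_bot_iff, ← LieIdeal.derivedSeries_eq_bot_iff]
  exact hl

/-- The radical of `L ⧸ radical` vanishes, since an extension of solvable by solvable is solvable. -/
instance [FiniteDimensional ℂ L] : HasTrivialRadical ℂ (L ⧸ radical ℂ L) := by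
  refine hasTrivialRadical_of_no_solvable_ideals fun I hI => ?_
  set π := quotHom (radical ℂ L) with hπ
  set J : LieIdeal ℂ L := I.comap π with hJ
  let f : J →ₗ⁅ℂ⁆ I :=
    { toFun := fun x => ⟨π x, LieIdeal.mem_comap.1 x.2⟩
      map_add' := fun x y => by ext; simp
      map_smul' := fun c x => by ext; simp
      map_lie' := fun {x y} => by ext; simp }
  have hf : ∀ x : f.ker, (x : L) ∈ radical ℂ L := fun x => by
    have h1 := LieHom.mem_ker.1 x.2
    exact quotHom_eq_zero.1 (congrArg Subtype.val h1)
  let e : f.ker →ₗ⁅ℂ⁆ radical ℂ L :=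
    { toFun := fun x => ⟨x, hf x⟩
      map_add' := fun x y => rfl
      map_smul' := fun c x => rfl
      map_lie' := fun {x y} => rfl }
  have he : Function.Injective e := fun x y h => by
    ext; exact congrArg (fun z : radical ℂ L => (z : L)) h
  have : IsSolvable f.ker := he.lieAlgebra_isSolvable
  have hJs : IsSolvable J := isSolvable_of_ker f this
  have hJ' := (LieIdeal.solvable_iff_le_radical ℂ L J).1 hJs
  rw [eq_bot_iff]
  intro y hy
  obtain ⟨x, rfl⟩ := quotHom_surjective _ y
  exact (quotHom_eq_zero.2 (hJ' (LieIdeal.mem_comap.2 hy)) :)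

theorem map_mem_radical_s3 [FiniteDimensional ℂ L] (φ : L ≃ₗ⁅ℂ⁆ L) {x : L} (hx : x ∈ radical ℂ L) :
    φ x ∈ radical ℂ L := by
  set J : LieIdeal ℂ L := (radical ℂ L).comap (φ.symm : L →ₗ⁅ℂ⁆ L) with hJ
  let f : J →ₗ⁅ℂ⁆ radical ℂ L :=
    { toFun := fun x => ⟨φ.symm x, LieIdeal.mem_comap.1 x.2⟩
      map_add' := fun x y => by ext; simp
      map_smul' := fun c x => by ext; simp
      map_lie' := fun {x y} => by ext; simp [LieEquiv.map_lie] }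
  have hf : Function.Injective f := fun x y h => by
    ext
    exact φ.symm.injective (congrArg Subtype.val h)
  have : IsSolvable J := hf.lieAlgebra_isSolvable
  refine (LieIdeal.solvable_iff_le_radical ℂ L J).1 this ?_
  refine LieIdeal.mem_comap.2 ?_
  have h : (φ.symm : L →ₗ⁅ℂ⁆ L) (φ x) = x := φ.symm_apply_apply x
  rw [h]; exact hx

theorem map_mem_radical_iff [FiniteDimensional ℂ L] (φ : L ≃ₗ⁅ℂ⁆ L) {x : L} :
    φ x ∈ radical ℂ L ↔ x ∈ radical ℂ L :=
  ⟨fun h => by simpa using map_mem_radical_s3 φ.symm h, map_mem_radical_s3 φ⟩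

/-- The automorphism of `L ⧸ radical` induced by an automorphism of `L`. -/
theorem exists_quot_equiv [FiniteDimensional ℂ L] (φ : L ≃ₗ⁅ℂ⁆ L) :
    ∃ ψ : (L ⧸ radical ℂ L) ≃ₗ⁅ℂ⁆ (L ⧸ radical ℂ L),
      ∀ x, quotHom (radical ℂ L) (φ x) = ψ (quotHom (radical ℂ L) x) := by
  set π := quotHom (radical ℂ L) with hπ
  let T : (L ⧸ radical ℂ L) →ₗ[ℂ] (L ⧸ radical ℂ L) :=
    Submodule.mapQ (radical ℂ L).toSubmodule (radical ℂ L).toSubmodule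
      ((φ : L →ₗ⁅ℂ⁆ L) : L →ₗ[ℂ] L) (fun x hx => map_mem_radical_s3 φ hx)
  have hT : ∀ x, T (π x) = π (φ x) := fun x => rfl
  let f : (L ⧸ radical ℂ L) →ₗ⁅ℂ⁆ (L ⧸ radical ℂ L) :=
    { T with
      map_lie' := fun {a b} => by
        obtain ⟨x, rfl⟩ := quotHom_surjective _ a
        obtain ⟨y, rfl⟩ := quotHom_surjective _ b
        change T ⁅π x, π y⁆ = ⁅T (π x), T (π y)⁆
        rw [← LieHom.map_lie, hT, hT, hT, ← LieHom.map_lie, LieEquiv.map_lie] }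
  have hf : ∀ x, f (π x) = π (φ x) := fun x => rfl
  refine ⟨LieEquiv.ofBijective f ⟨?_, ?_⟩, fun x => (hf x).symm⟩
  · refine (injective_iff_map_eq_zero f).2 fun a ha => ?_
    obtain ⟨x, rfl⟩ := quotHom_surjective _ a
    rw [hf, quotHom_eq_zero, map_mem_radical_iff] at ha
    exact quotHom_eq_zero.2 ha
  · intro a
    obtain ⟨x, rfl⟩ := quotHom_surjective _ a
    exact ⟨π (φ.symm x), by rw [hf, LieEquiv.apply_symm_apply]⟩

end Radical

end

/-! ### Automorphisms with ad-nilpotent fixed points -/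

section
open Module LieAlgebra

/-- The subalgebra of fixed points of an automorphism. -/
def fixedSub {L : Type*} [LieRing L] [LieAlgebra ℂ L] (φ : L ≃ₗ⁅ℂ⁆ L) : LieSubalgebra ℂ L where
  carrier := {x | φ x = x}
  add_mem' := fun {a b} (ha : φ a = a) (hb : φ b = b) => by
    change φ (a + b) = a + b
    rw [map_add, ha, hb]
  zero_mem' := map_zero φ
  smul_mem' := fun c x (hx : φ x = x) => by
    change φ (c • x) = c • x
    rw [map_smul, hx]
  lie_mem' := fun {a b} (ha : φ a = a) (hb : φ b = b) => by
    change φ ⁅a, b⁆ = ⁅a, b⁆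
    rw [LieEquiv.map_lie, ha, hb]

section
variable {L : Type*} [LieRing L] [LieAlgebra ℂ L] [FiniteDimensional ℂ L] {Λ : Finset ℂ}

/-- If all fixed points of `φ` are ad-nilpotent and the Killing form is nondegenerate, then `L = 0`.
By Engel's theorem the Killing form vanishes on the fixed subalgebra, which is also orthogonal to
the other eigenspaces of `φ`; so there are no nonzero fixed points, and `eq_zero_of_perfect`
applies. -/
theorem eq_zero_of_killing [IsKilling ℂ L] (φ : L ≃ₗ⁅ℂ⁆ L)
    (h0 : (0 : ℂ) ∉ Λ) (hA : AnnBy Λ ((φ : L →ₗ⁅ℂ⁆ L) : L →ₗ[ℂ] L))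
    (hn : ∀ x, φ x = x → IsNilpotent (ad ℂ L x)) (x : L) : x = 0 := by
  have hnd := IsKilling.killingForm_nondegenerate ℂ L
  have hss := hA.iSup_eigenspace
  have hnil : LieModule.IsNilpotent (fixedSub φ) L := by
    rw [LieModule.isNilpotent_iff_forall' (R := ℂ)]
    rintro ⟨x, hx⟩
    exact hn x hx
  have h11 : ∀ x y, φ x = x → φ y = y → killingForm ℂ L x y = 0 := by
    intro x y hx hy
    have := LieModule.traceForm_eq_zero_of_isNilpotent ℂ (fixedSub φ) L
    exact LinearMap.congr_fun₂ this (⟨x, hx⟩ : fixedSub φ) (⟨y, hy⟩ : fixedSub φ)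
  have hfix : ∀ x, φ x = x → x = 0 := by
    intro x hx
    refine hnd.1 x fun y => ?_
    have hle : (⊤ : Submodule ℂ L) ≤ LinearMap.ker (killingForm ℂ L x) := by
      rw [← hss]
      refine iSup_le fun μ y hy => ?_
      have hy' : φ y = μ • y := End.mem_eigenspace_iff.1 hy
      by_cases hμ : μ = 1
      · exact h11 x y hx (by simpa [hμ] using hy')
      have := killingForm_of_equiv_apply (R := ℂ) φ x y
      rw [hx, hy', map_smul, smul_eq_mul] at this
      have h2 : (μ - 1) * killingForm ℂ L x y = 0 := by rw [sub_mul, this]; ring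
      exact (mul_eq_zero.1 h2).resolve_left (sub_ne_zero.2 hμ)
    exact hle trivial
  refine eq_zero_of_perfect (φ : L →ₗ⁅ℂ⁆ L) Λ h0 hss
    (fun μ x hx0 hx => hA.mem_of_apply_eq hx0 hx) hfix (fun Y hY => ?_) x
  -- perfectness: a functional vanishing on all brackets comes from a central element
  by_contra hne
  obtain ⟨f, hf0, hf⟩ := Submodule.exists_dual_map_eq_bot_of_lt_top
    (lt_top_iff_ne_top.2 hne) inferInstance
  obtain ⟨z, rfl⟩ : ∃ z, killingForm ℂ L z = f := by
    have hinj : Function.Injective (killingForm ℂ L) := by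
      rw [← LinearMap.ker_eq_bot]; exact IsKilling.ker_killingForm_eq_bot ℂ L
    have : Function.Surjective (killingForm ℂ L) :=
      (LinearMap.injective_iff_surjective_of_finrank_eq_finrank
        (Subspace.dual_finrank_eq).symm).1 hinj
    exact this f
  have hz : ∀ a b : L, killingForm ℂ L z ⁅a, b⁆ = 0 := by
    intro a b
    have : killingForm ℂ L z ⁅a, b⁆ ∈ Y.map (killingForm ℂ L z) := ⟨_, hY a b, rfl⟩
    rwa [hf, Submodule.mem_bot] at this
  have hz2 : ∀ a : L, ⁅z, a⁆ = 0 := fun a => hnd.1 _ fun b => by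
    have := LieModule.traceForm_apply_lie_apply ℂ L L z a b
    exact this.trans (hz a b)
  have hzc : z ∈ center ℂ L := fun a => by rw [← lie_skew, hz2, neg_zero]
  have hc : center ℂ L = ⊥ := by
    have : HasTrivialRadical ℂ L := inferInstance
    exact HasTrivialRadical.eq_bot_of_isSolvable (R := ℂ) (center ℂ L)
  rw [hc] at hzc
  have : z = 0 := hzc
  exact hf0 (by rw [this, map_zero])

/-- A Lie algebra with a diagonalizable automorphism all of whose fixed points are ad-nilpotent is
solvable: apply `eq_zero_of_killing` to the quotient by the radical. -/
theorem isSolvable_of_fixed_nilpotent (φ : L ≃ₗ⁅ℂ⁆ L)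
    (h0 : (0 : ℂ) ∉ Λ) (hA : AnnBy Λ ((φ : L →ₗ⁅ℂ⁆ L) : L →ₗ[ℂ] L))
    (hn : ∀ x, φ x = x → IsNilpotent (ad ℂ L x)) : IsSolvable L := by
  obtain ⟨ψ, hψ⟩ := exists_quot_equiv φ
  set π := quotHom (radical ℂ L) with hπ
  have hB : AnnBy Λ (ψ.toLieHom : (L ⧸ radical ℂ L) →ₗ[ℂ] (L ⧸ radical ℂ L)) :=
    hA.of_surjective (f := (π : L →ₗ[ℂ] (L ⧸ radical ℂ L)))
      (B := (ψ.toLieHom : (L ⧸ radical ℂ L) →ₗ[ℂ] (L ⧸ radical ℂ L)))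
      (fun x => hψ x) (quotHom_surjective _)
  have key := eq_zero_of_killing ψ h0 hB ?_
  · have htop : radical ℂ L = ⊤ := by
      rw [eq_top_iff]
      intro x _
      exact quotHom_eq_zero.1 (key (π x))
    have := (LieIdeal.solvable_iff_le_radical ℂ L ⊤).2 (by rw [htop])
    have he : Function.Surjective ((⊤ : LieIdeal ℂ L).incl) := fun x => ⟨⟨x, trivial⟩, rfl⟩
    exact he.lieAlgebra_isSolvable
  · intro w hw
    obtain ⟨v, hv, rfl⟩ := hA.exists_lift (f := (π : L →ₗ[ℂ] (L ⧸ radical ℂ L)))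
      (B := (ψ.toLieHom : (L ⧸ radical ℂ L) →ₗ[ℂ] (L ⧸ radical ℂ L)))
      (fun x => hψ x) (quotHom_surjective _)
      (μ := 1) (w := w) (by simpa using hw)
    rw [one_smul] at hv
    obtain ⟨k, hk⟩ := hn v hv
    refine ⟨k, ?_⟩
    ext y
    obtain ⟨u, rfl⟩ := quotHom_surjective _ y
    have : ∀ j, ((ad ℂ (L ⧸ radical ℂ L) (π v)) ^ j) (π u) = π (((ad ℂ L v) ^ j) u) := by
      intro j
      induction j with
      | zero => rfl
      | succ j ih => rw [pow_succ', pow_succ', End.mul_apply, End.mul_apply, ih]; simp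
    exact (this k).trans (by rw [hk]; simp)
end

end

/-! ### A consequence of Lie's theorem -/

section
open Module LieAlgebra LieModule

/-- By Lie's theorem `a`, `b` and `c` act by upper triangular matrices in a suitable basis, so
`a * ⁅b, c⁆` is strictly upper triangular. -/
theorem isNilpotent_mul_lie (E : Type*) [LieRing E] [LieAlgebra ℂ E] [IsSolvable E] (a b c : E)
    (n : ℕ) : ∀ (V : Type*) [AddCommGroup V] [Module ℂ V] [FiniteDimensional ℂ V]
      [LieRingModule E V] [LieModule ℂ E V], finrank ℂ V = n →
      IsNilpotent (toEnd ℂ E V a * toEnd ℂ E V ⁅b, c⁆) := by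
  induction n using Nat.strong_induction_on with
  | _ n ih =>
  intro V _ _ _ _ _ hV
  rcases subsingleton_or_nontrivial V with h | h
  · exact ⟨1, Subsingleton.elim _ _⟩
  obtain ⟨χ, hχ⟩ := exists_nontrivial_weightSpace_of_isSolvable ℂ E V
  obtain ⟨⟨w, hw⟩, hw0⟩ := exists_ne (0 : weightSpace V χ)
  rw [mem_weightSpace] at hw
  have hw0 : w ≠ 0 := fun h => hw0 (Subtype.ext h)
  let W : LieSubmodule ℂ E V :=
    { Submodule.span ℂ {w} with
      lie_mem := fun {x m} hm => by
        obtain ⟨t, rfl⟩ := Submodule.mem_span_singleton.1 hm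
        rw [lie_smul, hw]
        exact Submodule.mem_span_singleton.2 ⟨t * χ x, by rw [mul_smul]⟩ }
  have hwW : w ∈ W := Submodule.mem_span_singleton_self w
  have hlt : finrank ℂ (V ⧸ W) < n := by
    have h1 : finrank ℂ (V ⧸ W.toSubmodule) + finrank ℂ W.toSubmodule = finrank ℂ V :=
      Submodule.finrank_quotient_add_finrank _
    have h2 : finrank ℂ W.toSubmodule = 1 := finrank_span_singleton hw0
    have h3 : finrank ℂ (V ⧸ W) = finrank ℂ (V ⧸ W.toSubmodule) := rfl
    omega
  obtain ⟨k, hk⟩ := ih _ hlt (V ⧸ W) rfl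
  refine ⟨k + 1, ?_⟩
  ext v
  have hq : ∀ j, (LieSubmodule.Quotient.mk' W)
      (((toEnd ℂ E V a * toEnd ℂ E V ⁅b, c⁆) ^ j) v) =
      ((toEnd ℂ E (V ⧸ W) a * toEnd ℂ E (V ⧸ W) ⁅b, c⁆) ^ j) (LieSubmodule.Quotient.mk' W v) := by
    intro j
    induction j with
    | zero => rfl
    | succ j ihj =>
      rw [pow_succ', pow_succ', Module.End.mul_apply]
      refine Eq.trans ?_ (congrArg (toEnd ℂ E (V ⧸ W) a * toEnd ℂ E (V ⧸ W) ⁅b, c⁆) ihj)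
      simp only [End.mul_apply, toEnd_apply_apply, LieModuleHom.map_lie]
  have h1 := hq k
  rw [hk, LinearMap.zero_apply, LieSubmodule.Quotient.mk_eq_zero] at h1
  obtain ⟨t, ht⟩ := Submodule.mem_span_singleton.1 h1
  rw [pow_succ', End.mul_apply, ← ht, End.mul_apply]
  have hzw : ⁅⁅b, c⁆, w⁆ = 0 := by
    rw [lie_lie, hw c, lie_smul, hw b, lie_smul, hw c, smul_smul, smul_smul, mul_comm, sub_self]
  simp only [toEnd_apply_apply, lie_smul, hzw, lie_zero, smul_zero, LinearMap.zero_apply]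

theorem traceForm_lie_eq_zero {E V : Type*} [LieRing E] [LieAlgebra ℂ E] [IsSolvable E]
    [AddCommGroup V] [Module ℂ V] [FiniteDimensional ℂ V] [LieRingModule E V] [LieModule ℂ E V]
    (a b c : E) : traceForm ℂ E V a ⁅b, c⁆ = 0 :=
  (LinearMap.isNilpotent_trace_of_isNilpotent (isNilpotent_mul_lie E a b c _ V rfl)).eq_zero

end

/-! ### A Cartan subalgebra adapted to the automorphism -/

section
open Module LieAlgebra LieModule

section
variable {L : Type*} [LieRing L] [LieAlgebra ℂ L] {Λ : Finset ℂ}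

theorem map_ad_pow (φ : L ≃ₗ⁅ℂ⁆ L) {x : L} (hx : φ x = x) (k : ℕ) (v : L) :
    φ (((ad ℂ L x) ^ k) v) = ((ad ℂ L x) ^ k) (φ v) := by
  induction k with
  | zero => rfl
  | succ k ih =>
    rw [pow_succ', End.mul_apply, End.mul_apply, ← ih, ad_apply, ad_apply, LieEquiv.map_lie, hx]

theorem killingForm_ad_pow (x m h : L) (k : ℕ) :
    killingForm ℂ L (((ad ℂ L x) ^ k) m) h = (-1) ^ k * killingForm ℂ L m (((ad ℂ L x) ^ k) h) := by
  induction k generalizing h with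
  | zero => simp
  | succ k ih =>
    rw [pow_succ', End.mul_apply, ad_apply, ← lie_skew, map_neg, LinearMap.neg_apply,
      traceForm_apply_lie_apply ℂ L L]
    have := ih ⁅x, h⁆
    rw [this, ← pow_succ', pow_succ (ad ℂ L x), End.mul_apply, ad_apply, pow_succ]
    ring

/-- The Killing form stays nondegenerate on an Engel subalgebra, because the Fitting components
`ker (ad x) ^ k` and `range (ad x) ^ k` are orthogonal. -/
theorem eq_zero_of_killing_engel [FiniteDimensional ℂ L] [IsKilling ℂ L] (x h : L) (hh : h ∈ LieSubalgebra.engel ℂ x)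
    (H : ∀ a ∈ LieSubalgebra.engel ℂ x, killingForm ℂ L a h = 0) : h = 0 := by
  refine (IsKilling.killingForm_nondegenerate ℂ L).2 h fun l => ?_
  obtain ⟨K0, hK0⟩ := (LieSubalgebra.mem_engel_iff ℂ x h).1 hh
  obtain ⟨k, hk, hkK⟩ := ((LinearMap.eventually_isCompl_ker_pow_range_pow (ad ℂ L x)).and
    (Filter.eventually_ge_atTop K0)).exists
  have hl : l ∈ LinearMap.ker ((ad ℂ L x) ^ k) ⊔ LinearMap.range ((ad ℂ L x) ^ k) := by
    rw [hk.sup_eq_top]; trivial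
  obtain ⟨a, ha, _, ⟨m, rfl⟩, rfl⟩ := Submodule.mem_sup.1 hl
  have h1 : ((ad ℂ L x) ^ k) h = 0 := by
    rw [← Nat.sub_add_cancel hkK, pow_add, End.mul_apply, hK0, map_zero]
  rw [map_add, LinearMap.add_apply, H a ((LieSubalgebra.mem_engel_iff ℂ x a).2 ⟨k, ha⟩),
    killingForm_ad_pow, h1, map_zero, mul_zero, add_zero]

/-- A semisimple Lie algebra with a diagonalizable automorphism `φ` has a Cartan subalgebra which is
the Engel subalgebra of a fixed point of `φ`.

Choose the fixed point `x` with Engel subalgebra `E` of least dimension. By the theorem on minimal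
Engel subalgebras, applied to the fixed points in `E`, every fixed point in `E` is ad-nilpotent on
`E`, so `E` is solvable. Then `⁅E, E⁆` is orthogonal to `E` for the Killing form, by Lie's theorem,
hence zero. -/
theorem exists_cartan [FiniteDimensional ℂ L] [IsKilling ℂ L] (φ : L ≃ₗ⁅ℂ⁆ L)
    (h0 : (0 : ℂ) ∉ Λ) (hA : AnnBy Λ ((φ : L →ₗ⁅ℂ⁆ L) : L →ₗ[ℂ] L)) :
    ∃ x : L, φ x = x ∧ IsLieAbelian (LieSubalgebra.engel ℂ x) := by
  obtain ⟨x, hx, hmin⟩ := WellFounded.has_min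
    (measure fun x : L => finrank ℂ (LieSubalgebra.engel ℂ x)).wf {x | φ x = x} ⟨0, map_zero φ⟩
  replace hmin : ∀ y, φ y = y → finrank ℂ (LieSubalgebra.engel ℂ x) ≤
    finrank ℂ (LieSubalgebra.engel ℂ y) := fun y hy => not_lt.1 (hmin y hy)
  replace hx : φ x = x := hx
  refine ⟨x, hx, ?_⟩
  set E := LieSubalgebra.engel ℂ x with hE
  let U : LieSubalgebra ℂ L := E ⊓ fixedSub φ
  have hxE : x ∈ E := LieSubalgebra.self_mem_engel ℂ x
  have hbot : ∀ y, φ y = y → y ∈ E → E ≤ LieSubalgebra.engel ℂ y := by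
    intro y hy hyE
    have hb := LieAlgebra.engel_isBot_of_isMin (K := ℂ) (L := L)
      ((Cardinal.natCast_lt_aleph0).le.trans (Cardinal.aleph0_le_mk ℂ)) U
      ⟨E, x, ⟨hxE, hx⟩, rfl⟩ inf_le_left ?_
    · exact hb ⟨_, y, ⟨hyE, hy⟩, rfl⟩
    · rintro ⟨_, z, hz, rfl⟩ hle
      have hle' : (LieSubalgebra.engel ℂ z).toSubmodule ≤ E.toSubmodule := hle
      have := Submodule.eq_of_le_of_finrank_le hle' (hmin z hz.2)
      exact this.ge
  have hφE : ∀ v ∈ E, φ v ∈ E := by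
    intro v hv
    obtain ⟨k, hk⟩ := (LieSubalgebra.mem_engel_iff ℂ x v).1 hv
    exact (LieSubalgebra.mem_engel_iff ℂ x _).2 ⟨k, by rw [← map_ad_pow φ hx, hk, map_zero]⟩
  let f : E →ₗ⁅ℂ⁆ E :=
    { toFun := fun v => ⟨φ v, hφE v v.2⟩
      map_add' := fun x y => by ext; simp
      map_smul' := fun c x => by ext; simp
      map_lie' := fun {x y} => by ext; simp [LieEquiv.map_lie] }
  have hf : Function.Injective f := fun a b h => by
    ext; exact φ.injective (congrArg Subtype.val h)
  let e : E ≃ₗ⁅ℂ⁆ E := LieEquiv.ofBijective f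
    ⟨hf, (LinearMap.injective_iff_surjective (f := (f : E →ₗ[ℂ] E))).1 hf⟩
  have he : ∀ v : E, (e v : L) = φ v := fun v => rfl
  have hsolv : IsSolvable E := by
    refine isSolvable_of_fixed_nilpotent e h0
      (hA.of_injective (f := E.toSubmodule.subtype) (fun v => he v) Subtype.val_injective) ?_
    intro z hz
    have hz' : φ z = z := by rw [← he z, hz]
    rw [Module.End.isNilpotent_iff_of_finite]
    intro v
    obtain ⟨k, hk⟩ := (LieSubalgebra.mem_engel_iff ℂ _ _).1 (hbot z hz' z.2 v.2)
    refine ⟨k, ?_⟩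
    have : ∀ j, ((((ad ℂ E z) ^ j) v : E) : L) = ((ad ℂ L (z : L)) ^ j) v := by
      intro j
      induction j with
      | zero => rfl
      | succ j ih => rw [pow_succ', pow_succ', End.mul_apply, End.mul_apply, ← ih]; rfl
    ext
    rw [this, hk]; rfl
  refine ⟨fun b c => ?_⟩
  ext
  refine eq_zero_of_killing_engel x _ (⁅b, c⁆ : E).2 fun a ha => ?_
  exact traceForm_lie_eq_zero (E := E) (V := L) ⟨a, ha⟩ b c
end

end

/-! ### Endomorphisms permuting a basis -/

section
open Module Polynomial

/-- If a diagonalizable `T` with at most `|Λ|` eigenvalues permutes a basis, then the basis has at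
most `dim ker (T - 1) * |Λ|` elements: the number of cycles is at most the dimension of the fixed
space, and each cycle has length at most `|Λ|`. -/
theorem card_le_of_perm {V ι : Type*} [AddCommGroup V] [Module ℂ V] [FiniteDimensional ℂ V]
    [Fintype ι] [DecidableEq ι] {Λ : Finset ℂ} (b : Basis ι ℂ V) (T : End ℂ V)
    (σ : Equiv.Perm ι) (hT : ∀ i, T (b i) = b (σ i)) (hA : AnnBy Λ T) :
    Fintype.card ι ≤ finrank ℂ (LinearMap.ker (T - 1)) * Λ.card := by
  classical
  let Q := Quotient (Equiv.Perm.SameCycle.setoid σ)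
  have hTk : ∀ (k : ℕ) i, (T ^ k) (b i) = b ((σ ^ k) i) := by
    intro k i
    induction k with
    | zero => simp
    | succ k ih => rw [pow_succ', End.mul_apply, ih, hT, pow_succ', Equiv.Perm.mul_apply]
  -- the number of cycles is at most the dimension of the fixed space
  have hQ : Fintype.card Q ≤ finrank ℂ (LinearMap.ker (T - 1)) := by
    let f : V →ₗ[ℂ] (Q → ℂ) := b.constr ℂ fun i => Pi.single (Quotient.mk'' i) 1
    have hf : ∀ i, f (b i) = Pi.single (Quotient.mk'' i) 1 := fun i => b.constr_basis ℂ _ i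
    have hfs : LinearMap.range f = ⊤ := by
      rw [eq_top_iff, ← (Pi.basisFun ℂ Q).span_eq, Submodule.span_le]
      rintro _ ⟨q, rfl⟩
      obtain ⟨i, rfl⟩ := Quotient.exists_rep q
      exact ⟨b i, by rw [hf, Pi.basisFun_apply]⟩
    have hle : LinearMap.range (T - 1) ≤ LinearMap.ker f := by
      rw [LinearMap.range_le_ker_iff]
      refine b.ext fun i => ?_
      rw [LinearMap.comp_apply, LinearMap.sub_apply, hT, map_sub, End.one_apply, hf, hf,
        LinearMap.zero_apply, sub_eq_zero]
      congr 1
      refine Quotient.sound' ?_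
      exact (Equiv.Perm.sameCycle_apply_left.2 (Equiv.Perm.SameCycle.refl σ i))
    have h1 := LinearMap.finrank_range_add_finrank_ker f
    have h2 := LinearMap.finrank_range_add_finrank_ker (T - 1)
    have h3 := Submodule.finrank_mono hle
    rw [hfs, finrank_top, finrank_fintype_fun_eq_card] at h1
    omega
  -- `V` is generated by the first `|Λ|` iterates of one basis vector in each cycle
  set p : ℂ[X] := ∏ μ ∈ Λ, (X - C μ) with hp
  have hpm : p.Monic := monic_prod_of_monic _ _ fun μ _ => monic_X_sub_C μ
  have hpd : p.degree = Λ.card := by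
    rw [hp, degree_prod]; simp
  let W := Submodule.span ℂ (Set.range fun x : Q × Fin Λ.card => (T ^ (x.2 : ℕ)) (b x.1.out))
  have hW : ∀ (q : Q) (k : ℕ), (T ^ k) (b q.out) ∈ W := by
    intro q k
    have h1 : T ^ k = aeval T (X ^ k %ₘ p) := by
      rw [aeval_modByMonic_eq_self_of_root (show aeval T p = 0 from hA)]; simp
    rw [h1, aeval_eq_sum_range, LinearMap.sum_apply]
    refine Submodule.sum_mem _ fun j _ => ?_
    by_cases hj : (X ^ k %ₘ p).coeff j = 0
    · simp [hj]
    have hjlt : j < Λ.card := by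
      have := (le_degree_of_ne_zero hj).trans_lt (degree_modByMonic_lt (X ^ k) hpm)
      rw [hpd] at this
      exact_mod_cast this
    exact Submodule.smul_mem _ _ (Submodule.subset_span ⟨(q, ⟨j, hjlt⟩), rfl⟩)
  have hWtop : W = ⊤ := by
    rw [eq_top_iff, ← b.span_eq, Submodule.span_le]
    rintro _ ⟨i, rfl⟩
    have hsame : σ.SameCycle (Quotient.mk'' i : Q).out i :=
      Quotient.exact' (Quotient.out_eq' (Quotient.mk'' i : Q))
    obtain ⟨k, -, hk⟩ := hsame.exists_pow_eq'
    have := hW (Quotient.mk'' i) k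
    rw [hTk, hk] at this
    exact this
  have h4 : finrank ℂ W ≤ Fintype.card (Q × Fin Λ.card) := finrank_range_le_card _
  rw [hWtop, finrank_top, finrank_eq_card_basis b, Fintype.card_prod, Fintype.card_fin] at h4
  exact h4.trans (Nat.mul_le_mul_right _ hQ)

/-- The version of `card_le_of_perm` for an endomorphism whose transpose permutes a basis. -/
theorem card_le_of_perm_dual {V ι : Type*} [AddCommGroup V] [Module ℂ V] [FiniteDimensional ℂ V]
    [Fintype ι] [DecidableEq ι] {Λ : Finset ℂ} (b : Basis ι ℂ (Dual ℂ V)) (A : End ℂ V)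
    (σ : Equiv.Perm ι) (hb : ∀ i v, b i (A v) = b (σ i) v) (hA : AnnBy Λ A) :
    Fintype.card ι ≤ finrank ℂ (LinearMap.ker (A - 1)) * Λ.card := by
  -- the transpose satisfies the same polynomial identities
  have hT : AnnBy Λ (LinearMap.dualMap A) := by
    have key : ∀ (p : ℂ[X]) (f : Dual ℂ V) v, aeval (LinearMap.dualMap A) p f v
        = f (aeval A p v) := by
      intro p f v
      induction p using Polynomial.induction_on' with
      | add p q hp hq => simp [hp, hq]
      | monomial n a =>
        have hn : ∀ f : Dual ℂ V, ((LinearMap.dualMap A) ^ n) f v = f ((A ^ n) v) := by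
          induction n with
          | zero => simp
          | succ n ih =>
            intro f
            rw [pow_succ, End.mul_apply, ih, LinearMap.dualMap_apply, pow_succ' A, End.mul_apply]
        simp [aeval_monomial, Module.algebraMap_end_apply, hn]
    ext f v
    rw [key, show aeval A _ = 0 from hA]; simp
  have h := card_le_of_perm b (LinearMap.dualMap A) σ (fun i => LinearMap.ext fun v => hb i v) hT
  have e : LinearMap.dualMap A - 1 = LinearMap.dualMap (A - 1) := by
    ext f v; simp
  have h1 := LinearMap.finrank_range_add_finrank_ker (A - 1)
  have h2 := LinearMap.finrank_range_add_finrank_ker (LinearMap.dualMap (A - 1))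
  rw [LinearMap.finrank_range_dualMap_eq_finrank_range, Subspace.dual_finrank_eq] at h2
  rw [e] at h
  rwa [show finrank ℂ (LinearMap.ker (A - 1))
    = finrank ℂ (LinearMap.ker (LinearMap.dualMap (A - 1))) by omega]

end

/-! ### A cubic bound for the number of roots -/

section
open Module

/-- A reduced crystallographic root system in a space of dimension `r` has at most `2 (r ^ 3 + r)`
roots. If `b ≠ ± a` is not longer than `a`, then `⟨b, a^∨⟩ ∈ {-1, 0, 1}`, so the polynomial function
`b ↦ l ^ 3 - l`, `l = ⟨b, a^∨⟩`, vanishes at `b`, while it takes the value `6` at `a`. Hence these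
functions, for `a` running over the roots with `f a > 0`, form a triangular system and are linearly
independent; they lie in the span of the `r ^ 3 + r` cubic and linear coordinate monomials. -/
theorem card_roots_le {ι M N : Type*} [Fintype ι] [AddCommGroup M] [Module ℂ M] [AddCommGroup N]
    [Module ℂ N] [FiniteDimensional ℂ M] (P : RootPairing ι ℂ M N)
    [P.IsCrystallographic] [P.IsReduced] (f : M →+ ℚ) (hf : ∀ i, f (P.root i) ≠ 0) :
    Fintype.card ι ≤ 2 * (finrank ℂ M ^ 3 + finrank ℂ M) := by
  classical
  set S : Finset ι := Finset.univ.filter fun i => 0 < f (P.root i) with hS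
  have hneg : ∀ i, P.root (P.reflectionPerm i i) = - P.root i := fun i => by simp
  have hcard : Fintype.card ι ≤ 2 * S.card := by
    have h1 : (Finset.univ.filter fun i => ¬ 0 < f (P.root i)).card ≤ S.card := by
      refine Finset.card_le_card_of_injOn (fun i => P.reflectionPerm i i) ?_ ?_
      · intro i hi
        have hi' := (Finset.mem_filter.1 hi).2
        refine Finset.mem_coe.2 (Finset.mem_filter.2 ⟨Finset.mem_univ _, ?_⟩)
        rw [hneg, map_neg]
        have := lt_of_le_of_ne (not_lt.1 hi') (hf i)
        linarith
      · intro i _ j _ hij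
        have h : P.root (P.reflectionPerm i i) = P.root (P.reflectionPerm j j) :=
          congrArg P.root hij
        rw [hneg, hneg, neg_inj] at h
        exact P.root.injective h
    have h2 : S.card + (Finset.univ.filter fun i => ¬ 0 < f (P.root i)).card = Fintype.card ι := by
      rw [← Finset.card_univ]
      exact Finset.card_filter_add_card_filter_not _
    omega
  refine hcard.trans (Nat.mul_le_mul_left 2 ?_)
  set r := finrank ℂ M with hr
  let e : Basis (Fin r) ℂ M := finBasis ℂ M
  let B := P.posRootForm ℤ
  -- the cubic function `l ^ 3 - l` with `l` the pairing with the coroot of `a`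
  let G : ι → ι → ℂ := fun a b => (P.pairing b a) ^ 3 - P.pairing b a
  let X : (Fin r × Fin r × Fin r) ⊕ Fin r → ι → ℂ := fun s b =>
    match s with
    | Sum.inl (i, j, k) => e.repr (P.root b) i * e.repr (P.root b) j * e.repr (P.root b) k
    | Sum.inr i => e.repr (P.root b) i
  have hG : ∀ a, G a ∈ Submodule.span ℂ (Set.range X) := by
    intro a
    let c : Fin r → ℂ := fun i => P.toLinearMap (e i) (P.coroot a)
    have hl : ∀ b, P.pairing b a = ∑ i, e.repr (P.root b) i * c i := by
      intro b
      have h := congrArg (fun v => P.toLinearMap v (P.coroot a)) (e.sum_repr (P.root b))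
      simp only [map_sum, LinearMap.sum_apply, map_smul, LinearMap.smul_apply, smul_eq_mul] at h
      rw [RootPairing.pairing, RootPairing.root']
      exact h.symm
    have : G a = (∑ i, ∑ j, ∑ k, (c i * c j * c k) • X (Sum.inl (i, j, k)))
        - ∑ i, c i • X (Sum.inr i) := by
      ext b
      have cube : ∀ a : Fin r → ℂ, (∑ i, a i) ^ 3 = ∑ i, ∑ j, ∑ k, a i * a j * a k := by
        intro a
        simp only [pow_succ, pow_zero, one_mul, Finset.sum_mul, Finset.mul_sum]
        exact Finset.sum_congr rfl fun i _ => Finset.sum_congr rfl fun j _ =>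
          Finset.sum_congr rfl fun k _ => by ring
      simp only [G, X, hl, cube, Pi.sub_apply, Finset.sum_apply, Pi.smul_apply, smul_eq_mul]
      congr 1
      · exact Finset.sum_congr rfl fun i _ => Finset.sum_congr rfl fun j _ =>
          Finset.sum_congr rfl fun k _ => by ring
      · exact Finset.sum_congr rfl fun i _ => by ring
    rw [this]
    refine Submodule.sub_mem _ ?_ ?_
    · exact Submodule.sum_mem _ fun i _ => Submodule.sum_mem _ fun j _ => Submodule.sum_mem _
        fun k _ => Submodule.smul_mem _ _ (Submodule.subset_span ⟨Sum.inl (i, j, k), rfl⟩)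
    · exact Submodule.sum_mem _ fun i _ =>
        Submodule.smul_mem _ _ (Submodule.subset_span ⟨Sum.inr i, rfl⟩)
  have hlin : LinearIndependent ℂ (fun a : S => G a) := by
    rw [Fintype.linearIndependent_iff]
    intro c hc
    by_contra! hne
    -- evaluate a linear relation at a shortest root `b` occurring in it
    obtain ⟨b, hb, hmin⟩ := (Finset.univ.filter fun a : S => c a ≠ 0).exists_min_image
      (fun a => B.rootLength a) (by obtain ⟨a, ha⟩ := hne; exact ⟨a, by simp [ha]⟩)
    have hb0 : c b ≠ 0 := (Finset.mem_filter.1 hb).2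
    have h1 := congrFun hc b
    rw [Finset.sum_apply, Finset.sum_eq_single b] at h1
    · simp only [Pi.smul_apply, smul_eq_mul, G, RootPairing.pairing_same, Pi.zero_apply,
        mul_eq_zero, hb0, false_or] at h1
      norm_num at h1
    · intro a _ hab
      rw [Pi.smul_apply, smul_eq_mul]
      by_cases hca : c a = 0
      · rw [hca, zero_mul]
      have hle := hmin a (by simp [hca])
      have hin : P.pairingIn ℤ b a ∈ ({-1, 0, 1} : Set ℤ) := by
        by_contra hnot
        refine absurd hle (not_le.2 (B.rootLength_lt_of_pairingIn_notMem ?_ ?_ hnot))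
        · intro h
          exact hab (Subtype.ext (P.root.injective h.symm))
        · intro h
          have h1 := (Finset.mem_filter.1 a.2).2
          have h2 := (Finset.mem_filter.1 b.2).2
          rw [h, map_neg] at h2
          linarith
      have hp : P.pairing b a = (P.pairingIn ℤ b a : ℂ) := (P.algebraMap_pairingIn ℤ b a).symm
      have : G a b = 0 := by
        simp only [G, hp]
        rcases hin with h | h | h <;> rw [h] <;> norm_num
      rw [this, mul_zero]
    · intro h; exact absurd (Finset.mem_univ b) h
  have h1 := finrank_span_eq_card hlin
  have h2 : Submodule.span ℂ (Set.range fun a : S => G a) ≤ Submodule.span ℂ (Set.range X) := by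
    rw [Submodule.span_le]
    rintro _ ⟨a, rfl⟩
    exact hG a
  have h3 := Submodule.finrank_mono h2
  have h4 : finrank ℂ (Submodule.span ℂ (Set.range X)) ≤ _ := finrank_range_le_card X
  rw [h1] at h3
  simp only [Fintype.card_coe, Fintype.card_sum, Fintype.card_prod, Fintype.card_fin] at h3 h4
  calc S.card ≤ _ := h3
    _ ≤ _ := h4
    _ = r ^ 3 + r := by ring

end

/-! ### The semisimple case -/

section
open Module LieAlgebra LieModule

/-- If the transpose of `A` permutes the roots and preserves a functional `f` that is nonzero on all
roots, then it permutes the simple roots attached to `f`, and these form a basis of the dual space. -/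
theorem finrank_le_of_base {ι V N : Type*} [Finite ι] [AddCommGroup V] [Module ℂ V]
    [FiniteDimensional ℂ V] [AddCommGroup N] [Module ℂ N] {Λ : Finset ℂ}
    (P : RootPairing ι ℂ (Dual ℂ V) N) [P.IsRootSystem] [P.IsCrystallographic]
    (f : Dual ℂ V →+ ℚ) (hf : ∀ i, f (P.root i) ≠ 0) (A : End ℂ V) (hA : AnnBy Λ A)
    (hs : Function.Surjective A) (hroot : ∀ i, ∃ j, ∀ v, P.root i (A v) = P.root j v)
    (hfA : ∀ χ : Dual ℂ V, f (LinearMap.dualMap A χ) = f χ) :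
    finrank ℂ V ≤ finrank ℂ (LinearMap.ker (A - 1)) * Λ.card := by
  classical
  choose τ hτ using hroot
  replace hτ : ∀ i, P.root (τ i) = LinearMap.dualMap A (P.root i) := fun i =>
    LinearMap.ext fun v => (hτ i v).symm
  have hinj : Function.Injective (LinearMap.dualMap A) :=
    LinearMap.dualMap_injective_of_surjective hs
  have hτi : Function.Injective τ := fun i j h => by
    have := hτ i
    rw [h, hτ] at this
    exact P.root.injective (hinj this.symm)
  have hτs : Function.Surjective τ := Finite.surjective_of_injective hτi
  set s := IsAddIndecomposable.baseOf P.root f with hsdef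
  have hfτ : ∀ i, f (P.root (τ i)) = f (P.root i) := fun i => by rw [hτ, hfA]
  -- the base attached to `f` is permuted because `f` is invariant
  have hmem : ∀ i ∈ s, τ i ∈ s := by
    rintro i ⟨hi, hd⟩
    refine ⟨?_, fun j hj k hk hjk => ?_⟩
    · change 0 < f (P.root (τ i)); rw [hfτ]; exact hi
    obtain ⟨j, rfl⟩ := hτs j
    obtain ⟨k, rfl⟩ := hτs k
    have hj' : 0 < f (P.root j) := by rw [← hfτ]; exact hj
    have hk' : 0 < f (P.root k) := by rw [← hfτ]; exact hk
    rw [hτ, hτ, hτ, ← map_add] at hjk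
    rcases hd j hj' k hk' (hinj hjk) with h | h
    · left; rw [hτ, h, map_zero]
    · right; rw [hτ, h, map_zero]
  have : Fintype s := Fintype.ofFinite s
  have hlin : LinearIndependent ℂ fun i : s => P.root i := P.linearIndepOn_root_baseOf f hf
  have hspan : ⊤ ≤ Submodule.span ℂ (Set.range fun i : s => P.root i) := by
    let := P.indexNeg
    rw [← RootPairing.IsRootSystem.span_root_eq_top (P := P), Submodule.span_le]
    rintro _ ⟨i, rfl⟩
    have hle : AddSubmonoid.closure (P.root '' s) ≤
        (Submodule.span ℂ (Set.range fun i : s => P.root i)).toAddSubmonoid := by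
      rw [AddSubmonoid.closure_le]
      rintro _ ⟨j, hj, rfl⟩
      exact Submodule.subset_span ⟨⟨j, hj⟩, rfl⟩
    rcases IsAddIndecomposable.mem_or_neg_mem_closure_baseOf P.root f i (hf i) (by simp)
      with h | h
    · exact hle h
    · exact (Submodule.neg_mem_iff _).1 (hle h)
  let b : Basis s ℂ (Dual ℂ V) := Basis.mk hlin hspan
  have hb : ∀ i, b i = P.root i := fun i => Basis.mk_apply _ _ i
  let σ₀ : s → s := fun i => ⟨τ i, hmem i i.2⟩
  have hσ₀ : Function.Injective σ₀ := fun i j h => Subtype.ext (hτi (congrArg Subtype.val h))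
  let σ : Equiv.Perm s := Equiv.ofBijective σ₀ (Finite.injective_iff_bijective.1 hσ₀)
  have := card_le_of_perm_dual b A σ (fun i v => by
    rw [hb, hb]; exact (LinearMap.congr_fun (hτ i) v).symm) hA
  rwa [← finrank_eq_card_basis b, Subspace.dual_finrank_eq] at this

section
variable {L : Type*} [LieRing L] [LieAlgebra ℂ L] [FiniteDimensional ℂ L]

theorem finrank_iSup_le_card {V ι : Type*} [AddCommGroup V] [Module ℂ V] [FiniteDimensional ℂ V]
    (s : Finset ι) (W : ι → Submodule ℂ V) (hW : ∀ i ∈ s, finrank ℂ (W i) ≤ 1) :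
    finrank ℂ ↥(⨆ i ∈ s, W i) ≤ s.card := by
  classical
  induction s using Finset.induction_on with
  | empty => simp
  | insert a s ha ih =>
    rw [Finset.iSup_insert, Finset.card_insert_of_notMem ha]
    have h1 := Submodule.finrank_add_le_finrank_add_finrank (W a) (⨆ i ∈ s, W i)
    have h2 := hW a (Finset.mem_insert_self a s)
    have h3 := ih fun i hi => hW i (Finset.mem_insert_of_mem hi)
    omega

theorem finrank_le_rank (H : LieSubalgebra ℂ L) [H.IsCartanSubalgebra] [IsKilling ℂ L] :
    finrank ℂ L ≤ finrank ℂ H + H.root.card := by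
  have h1 := congrArg LieSubmodule.toSubmodule
    (cartan_sup_iSup_rootSpace_eq_top (K := ℂ) (H := H) (L := L))
  have h2 : (⨆ α : Weight ℂ H L, ⨆ (_ : α.IsNonZero), rootSpace H α).toSubmodule
      = ⨆ α ∈ H.root, (rootSpace H (α : Weight ℂ H L)).toSubmodule := by
    simp only [LieSubmodule.iSup_toSubmodule]
    simp
  rw [LieSubmodule.sup_toSubmodule, h2] at h1
  have h3 := finrank_iSup_le_card H.root (fun α => (rootSpace H (α : Weight ℂ H L)).toSubmodule)
    fun α hα => (IsKilling.finrank_rootSpace_eq_one α (by simpa using hα)).le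
  have h4 := Submodule.finrank_add_le_finrank_add_finrank (H.toLieSubmodule.toSubmodule)
    (⨆ α ∈ H.root, (rootSpace H (α : Weight ℂ H L)).toSubmodule)
  rw [h1, LieSubmodule.top_toSubmodule, finrank_top] at h4
  exact h4.trans (Nat.add_le_add_left h3 _)

/-- The bound for semisimple Lie algebras: the Cartan subalgebra `H` of `exists_cartan` has dimension
`r ≤ m * |Λ|`, and `dim L` is at most `r` plus the number of roots. Positivity of roots is measured
through their values at the fixed point `x`, so that `φ` preserves it. -/
theorem finrank_le_of_killing [IsKilling ℂ L] {Λ : Finset ℂ} (φ : L ≃ₗ⁅ℂ⁆ L)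
    (h0 : (0 : ℂ) ∉ Λ) (hA : AnnBy Λ ((φ : L →ₗ⁅ℂ⁆ L) : L →ₗ[ℂ] L)) {m : ℕ}
    (hm : finrank ℂ (fixedSub φ) ≤ m) :
    finrank ℂ L ≤ 2 * (m * Λ.card) ^ 3 + 3 * (m * Λ.card) := by
  obtain ⟨x, hx, hab⟩ := exists_cartan φ h0 hA
  set H := LieSubalgebra.engel ℂ x with hH
  have hxH : x ∈ H := LieSubalgebra.self_mem_engel ℂ x
  have : H.IsCartanSubalgebra :=
    { nilpotent := inferInstance
      self_normalizing := LieSubalgebra.normalizer_engel ℂ x }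
  have hφH : ∀ v ∈ H, φ v ∈ H := by
    intro v hv
    obtain ⟨k, hk⟩ := (LieSubalgebra.mem_engel_iff ℂ x v).1 hv
    exact (LieSubalgebra.mem_engel_iff ℂ x _).2 ⟨k, by rw [← map_ad_pow φ hx, hk, map_zero]⟩
  let A : End ℂ H :=
    { toFun := fun v => ⟨φ v, hφH v v.2⟩
      map_add' := fun x y => by ext; simp
      map_smul' := fun c x => by ext; simp }
  have hAφ : ∀ v : H, (A v : L) = φ v := fun v => rfl
  have hAi : Function.Injective A := fun a b h => by
    ext; exact φ.injective (congrArg Subtype.val h)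
  have hAs : Function.Surjective A := LinearMap.injective_iff_surjective.1 hAi
  have hAA : AnnBy Λ A :=
    hA.of_injective (f := H.toSubmodule.subtype) (fun v => hAφ v) Subtype.val_injective
  -- roots do not vanish at `x`, as the centralizer of `x` is contained in `H`
  have hroot0 : ∀ β : H.root, (β : Weight ℂ H L) ⟨x, hxH⟩ ≠ 0 := by
    rintro ⟨β, hβ⟩ h
    obtain ⟨v, hv, hv0⟩ := β.exists_ne_zero
    have hl := fun y => IsKilling.lie_eq_smul_of_mem_rootSpace hv y
    have hvH : v ∈ H := by
      refine (LieSubalgebra.mem_engel_iff ℂ x v).2 ⟨1, ?_⟩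
      have := hl ⟨x, hxH⟩
      rw [pow_one, ad_apply]
      rw [h, zero_smul] at this
      exact this
    have hz : β.IsZero := by
      funext y
      have h2 := hl y
      have h3 : ⁅y, v⁆ = 0 := congrArg Subtype.val (hab.trivial y ⟨v, hvH⟩)
      rw [h3] at h2
      exact (smul_eq_zero.1 h2.symm).resolve_right hv0
    simp at hβ
    exact hβ hz
  -- a root composed with `φ` is a root
  have hroot : ∀ β : H.root, ∃ γ : H.root, ∀ v : H, (β : Weight ℂ H L) (A v)
      = (γ : Weight ℂ H L) v := by
    rintro ⟨β, hβ⟩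
    obtain ⟨v, hv, hv0⟩ := β.exists_ne_zero
    have hl := fun y => IsKilling.lie_eq_smul_of_mem_rootSpace hv y
    have hw : φ.symm v ∈ rootSpace H (fun y => β (A y)) := by
      refine weightSpace_le_genWeightSpace L _ ?_
      rw [mem_weightSpace]
      intro y
      apply φ.injective
      have h2 := hl (A y)
      change φ ⁅(y : L), φ.symm v⁆ = _
      have h3 : φ (β (A y) • φ.symm v) = β (A y) • v := by
        rw [map_smul]
        exact congrArg _ (φ.apply_symm_apply v)
      refine Eq.trans ?_ h3.symm
      rw [LieEquiv.map_lie, LieEquiv.apply_symm_apply]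
      exact h2
    let γ : Weight ℂ H L := ⟨fun y => β (A y), fun hbot => by
      rw [rootSpace, hbot] at hw
      exact hv0 (φ.symm.injective (by simpa using hw))⟩
    have hγ : γ ∈ H.root := by
      simp only [LieSubalgebra.root, Finset.mem_filter, Finset.mem_univ, true_and] at hβ ⊢
      intro hz
      refine hβ ?_
      funext y
      obtain ⟨y, rfl⟩ := hAs y
      exact congrFun hz y
    exact ⟨⟨γ, hγ⟩, fun v => rfl⟩
  -- a `ℚ`-linear functional on `ℂ` turns the values of the roots at `x` into nonzero rationals
  obtain ⟨g, hg⟩ := exists_dual_forall_apply_ne_zero (K := ℚ)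
    (fun β : H.root => (β : Weight ℂ H L) ⟨x, hxH⟩) hroot0
  let f : Dual ℂ H →+ ℚ :=
    { toFun := fun χ => g (χ ⟨x, hxH⟩)
      map_zero' := by simp
      map_add' := fun a b => by simp }
  let P := IsKilling.rootSystem H
  have hf : ∀ i, f (P.root i) ≠ 0 := hg
  have hr := finrank_le_of_base P f hf A hAA hAs hroot fun χ => by
    change g (χ (A ⟨x, hxH⟩)) = g (χ ⟨x, hxH⟩)
    rw [show A ⟨x, hxH⟩ = ⟨x, hxH⟩ from Subtype.ext hx]
  have hk : finrank ℂ (LinearMap.ker (A - 1)) ≤ finrank ℂ (fixedSub φ) := by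
    have hfix : ∀ v : LinearMap.ker (A - 1), φ (v : H) = (v : H) := fun v => by
      have := v.2
      rw [LinearMap.mem_ker, LinearMap.sub_apply, sub_eq_zero, End.one_apply] at this
      exact congrArg Subtype.val this
    let F : LinearMap.ker (A - 1) →ₗ[ℂ] fixedSub φ :=
      { toFun := fun v => ⟨(v : H), hfix v⟩
        map_add' := fun _ _ => rfl
        map_smul' := fun _ _ => rfl }
    refine LinearMap.finrank_le_finrank_of_injective (f := F) fun a b h => ?_
    exact Subtype.ext (Subtype.ext (congrArg (fun z : fixedSub φ => (z : L)) h))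
  have h1 := card_roots_le P f hf
  have h2 := finrank_le_rank H
  rw [Fintype.card_coe, Subspace.dual_finrank_eq] at h1
  have h3 : finrank ℂ H ≤ m * Λ.card := hr.trans (Nat.mul_le_mul_right _ (hk.trans hm))
  have h4 := Nat.pow_le_pow_left h3 3
  omega
end

end

/-! ### Reduction to the semisimple case -/

/-- Let `g` be a finite-dimensional Lie algebra over `ℂ` with solvable radical `r`, and let
`α` be a semisimple automorphism of `g` having exactly `n` distinct eigenvalues and whose
fixed-point subalgebra has dimension `m`. Then
`dim (g ⧸ r) ≤ 16 * (m * n) ^ 3 + 4 * (m * n) ^ 2 + 224 * (m * n)`. -/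
theorem finrank_quotient_radical_le_bound
    (g : Type*) [LieRing g] [LieAlgebra ℂ g] [FiniteDimensional ℂ g]
    (α : g ≃ₗ⁅ℂ⁆ g) (n m : ℕ)
    (hss : Module.End.IsSemisimple (α.toLinearEquiv : g →ₗ[ℂ] g))
    (heig : {μ : ℂ | Module.End.HasEigenvalue (α.toLinearEquiv : g →ₗ[ℂ] g) μ}.ncard = n)
    (hfix : Module.finrank ℂ ↥(Module.End.eigenspace (α.toLinearEquiv : g →ₗ[ℂ] g) 1) = m) :
    Module.finrank ℂ (g ⧸ LieAlgebra.radical ℂ g)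
      ≤ 16 * (m * n) ^ 3 + 4 * (m * n) ^ 2 + 224 * (m * n) := by
  classical
  have hfin : {μ : ℂ | Module.End.HasEigenvalue (α.toLinearEquiv : g →ₗ[ℂ] g) μ}.Finite :=
    Module.End.finite_hasEigenvalue _
  set Λ : Finset ℂ := hfin.toFinset with hΛ
  have hcard : Λ.card = n := by rw [← heig, Set.ncard_eq_toFinset_card _ hfin]
  have h0 : (0 : ℂ) ∉ Λ := by
    intro h
    obtain ⟨v, hv⟩ := (hfin.mem_toFinset.1 h : Module.End.HasEigenvalue _ _).exists_hasEigenvector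
    have h1 : α v = (0 : ℂ) • v := hv.apply_eq_smul
    rw [zero_smul] at h1
    exact hv.2 (α.injective (h1.trans (map_zero α).symm))
  have hA : AnnBy Λ (α.toLinearEquiv : g →ₗ[ℂ] g) :=
    annBy_of_isSemisimple hss fun μ hμ => hfin.mem_toFinset.2 hμ
  obtain ⟨ψ, hψ⟩ := exists_quot_equiv α
  set π := quotHom (LieAlgebra.radical ℂ g) with hπ
  have hπs : Function.Surjective π := quotHom_surjective _
  have hB : AnnBy Λ ((ψ : (g ⧸ LieAlgebra.radical ℂ g) →ₗ⁅ℂ⁆ (g ⧸ LieAlgebra.radical ℂ g)) :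
      (g ⧸ LieAlgebra.radical ℂ g) →ₗ[ℂ] (g ⧸ LieAlgebra.radical ℂ g)) :=
    hA.of_surjective (f := (π : g →ₗ[ℂ] (g ⧸ LieAlgebra.radical ℂ g))) (fun x => hψ x) hπs
  have hm : Module.finrank ℂ (fixedSub ψ) ≤ m := by
    have hle : (fixedSub ψ).toSubmodule ≤
        (Module.End.eigenspace (α.toLinearEquiv : g →ₗ[ℂ] g) 1).map
          (π : g →ₗ[ℂ] (g ⧸ LieAlgebra.radical ℂ g)) := by
      intro w hw
      have hw' : ψ w = w := hw
      obtain ⟨v, hv, hvw⟩ := hA.exists_lift (μ := 1)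
        (f := (π : g →ₗ[ℂ] (g ⧸ LieAlgebra.radical ℂ g)))
        (B := ((ψ : (g ⧸ LieAlgebra.radical ℂ g) →ₗ⁅ℂ⁆ (g ⧸ LieAlgebra.radical ℂ g)) :
          (g ⧸ LieAlgebra.radical ℂ g) →ₗ[ℂ] (g ⧸ LieAlgebra.radical ℂ g)))
        (fun x => hψ x) hπs ((hw'.trans (one_smul ℂ w).symm :))
      exact ⟨v, Module.End.mem_eigenspace_iff.2 hv, hvw⟩
    exact (Submodule.finrank_mono hle).trans ((Submodule.finrank_map_le _ _).trans hfix.le)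
  have := finrank_le_of_killing ψ h0 hB hm
  rw [hcard] at this
  omega
end
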